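/- arXiv:1203.2986 — 2 statements merged into one kernel-verified Lean document; each statement's English description precedes it below -/
import Mathlib

section
/- For every 0 < ε < 1/8, the unique radially symmetric solution ū_ε of the Dirichlet problem satisfies, for all 0 < r < 1: |ū_ε(r)| ≤ 1/(2ε), |ū_ε'(r)| ≤ 1/(2ε), and |ū_ε''(r)| ≤ 3/(2ε²). -/
open Real Set Metric

/-- The Euclidean Laplacian of `u : ℝ² → ℝ`. -/
noncomputable def laplacian2 (u : EuclideanSpace ℝ (Fin 2) → ℝ)
    (x : EuclideanSpace ℝ (Fin 2)) : ℝ :=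
  ∑ i : Fin 2,
    fderiv ℝ (fun y => fderiv ℝ u y (EuclideanSpace.single i 1)) x (EuclideanSpace.single i 1)

/-- `u` is a solution of the Dirichlet problem
`Δu = ε⁻²·(exp u − |x|²·exp (−u))` in `B₁(0)`, `u = 0` on `∂B₁(0)`. -/
def IsDirichletSol (ε : ℝ) (u : EuclideanSpace ℝ (Fin 2) → ℝ) : Prop :=
  ContinuousOn u (closedBall 0 1) ∧
  ContDiffOn ℝ (⊤ : ℕ∞) u (ball 0 1) ∧
  (∀ x ∈ ball (0 : EuclideanSpace ℝ (Fin 2)) 1,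
    laplacian2 u x = (ε ^ 2)⁻¹ * (Real.exp (u x) - ‖x‖ ^ 2 * Real.exp (-u x))) ∧
  (∀ x ∈ sphere (0 : EuclideanSpace ℝ (Fin 2)) 1, u x = 0)


/-- core ODE estimate -/
lemma ode_core (ε : ℝ) (hε : 0 < ε) (hε8 : ε < 1/8) (φ v k : ℝ → ℝ)
    (hc : ContinuousOn φ (Icc 0 1)) (h1 : φ 1 = 0)
    (hφ : ∀ t ∈ Ioo (-1 : ℝ) 1, HasDerivAt φ (v t) t)
    (hv : ContinuousOn v (Ioo (-1 : ℝ) 1))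
    (hk : ∀ r ∈ Ioo (0 : ℝ) 1, HasDerivAt v (k r) r)
    (hode : ∀ r ∈ Ioo (0 : ℝ) 1,
      k r + v r / r = (ε ^ 2)⁻¹ * (Real.exp (φ r) - r ^ 2 * Real.exp (-φ r))) :
    ∀ r ∈ Ioo (0 : ℝ) 1, |φ r| ≤ 1 / (2 * ε) ∧ |v r| ≤ 1 / (2 * ε) ∧
      |k r| ≤ 3 / (2 * ε ^ 2) := by
  have hi : 0 < (ε^2)⁻¹ := by positivity
  set F : ℝ → ℝ := fun r => (ε ^ 2)⁻¹ * (Real.exp (φ r) - r ^ 2 * Real.exp (-φ r)) with hF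
  have hφ' : ∀ t ∈ Ioo (0 : ℝ) 1, HasDerivAt φ (v t) t :=
    fun t ht => hφ t ⟨by linarith [ht.1], ht.2⟩
  have hsub : Ico (0:ℝ) 1 ⊆ Ioo (-1) 1 := fun t ht => ⟨by linarith [ht.1], ht.2⟩
  -- P
  have hPd : ∀ r ∈ Ioo (0:ℝ) 1, HasDerivAt (fun r => r * v r) (r * F r) r := by
    intro r hr
    have := (hasDerivAt_id r).mul (hk r hr)
    refine HasDerivAt.congr_deriv this ?_
    have h := hode r hr
    have hr0 : r ≠ 0 := hr.1.ne'
    simp only [hF, id]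
    rw [← h]; field_simp; ring
  have hPc : ContinuousOn (fun r => r * v r) (Ico 0 1) :=
    continuousOn_id.mul (hv.mono hsub)
  -- lower bound
  have hlow : ∀ r ∈ Ioo (0:ℝ) 1, Real.log r ≤ φ r := by
    by_contra! hcon
    obtain ⟨a, ha, hlt⟩ := hcon
    obtain ⟨M, hM⟩ := (isCompact_Icc.bddBelow_image hc)
    have hMb : ∀ r ∈ Icc (0:ℝ) 1, M ≤ φ r := fun r hr => hM ⟨r, hr, rfl⟩
    set δ := min a (Real.exp M) with hδ
    have hδ0 : 0 < δ := lt_min ha.1 (Real.exp_pos _)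
    have hδa : δ ≤ a := min_le_left _ _
    have hδM : Real.log δ ≤ M := by
      rw [Real.log_le_iff_le_exp hδ0]; exact min_le_right _ _
    have hhc : ContinuousOn (fun r => φ r - Real.log r) (Icc δ 1) := by
      apply ContinuousOn.sub (hc.mono (Icc_subset_Icc_left hδ0.le))
      exact Real.continuousOn_log.mono (fun x hx => (lt_of_lt_of_le hδ0 hx.1).ne')
    obtain ⟨b, hb, hmin⟩ := isCompact_Icc.exists_isMinOn ⟨a, hδa, ha.2.le⟩ hhc
    have hba : φ b - Real.log b ≤ φ a - Real.log a := hmin ⟨hδa, ha.2.le⟩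
    have hbn : φ b - Real.log b < 0 := by linarith
    have hb1 : b < 1 := by
      rcases hb.2.lt_or_eq with h | h
      · exact h
      · subst h; simp [h1] at hbn
    have hbδ : δ < b := by
      rcases hb.1.lt_or_eq with h | h
      · exact h
      · exfalso
        have := hMb b ⟨by linarith, hb1.le⟩
        rw [← h] at this hbn; linarith
    have hbI : b ∈ Ioo (0:ℝ) 1 := ⟨by linarith, hb1⟩
    have hnhd : ∀ᶠ x in nhds b, x ∈ Ioo (0:ℝ) 1 := Ioo_mem_nhds hbI.1 hbI.2
    have hlm : IsLocalMin (fun r => φ r - Real.log r) b :=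
      hmin.isLocalMin (Icc_mem_nhds hbδ hb1)
    have hd1 : ∀ x ∈ Ioo (0:ℝ) 1, HasDerivAt (fun r => φ r - Real.log r) (v x - x⁻¹) x :=
      fun x hx => (hφ' x hx).sub (Real.hasDerivAt_log hx.1.ne')
    have hz : v b - b⁻¹ = 0 := hlm.hasDerivAt_eq_zero (hd1 b hbI)
    have hde : deriv (fun r => φ r - Real.log r) =ᶠ[nhds b] fun x => v x - x⁻¹ := by
      filter_upwards [hnhd] with x hx using (hd1 x hx).deriv
    have hd2 : HasDerivAt (fun x => v x - x⁻¹) (k b + (b^2)⁻¹) b := by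
      have := (hk b hbI).sub (hasDerivAt_inv hbI.1.ne')
      refine HasDerivAt.congr_deriv this ?_; ring
    have hdd : deriv (deriv (fun r => φ r - Real.log r)) b = k b + (b^2)⁻¹ := by
      rw [hde.deriv_eq]; exact hd2.deriv
    have hneg : k b + (b^2)⁻¹ < 0 := by
      have h := hode b hbI
      have e1 : v b / b = (b^2)⁻¹ := by
        have : v b = b⁻¹ := by linarith
        rw [this]; field_simp
      rw [e1] at h
      rw [h]
      apply mul_neg_of_pos_of_neg hi
      have h2 : Real.exp (φ b) < b := by
        rw [← Real.lt_log_iff_exp_lt hbI.1]; linarith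
      have h3 : Real.exp (φ b) * Real.exp (-φ b) = 1 := by rw [← Real.exp_add]; simp
      have h4 := Real.exp_pos (φ b)
      have h5 := Real.exp_pos (-φ b)
      have h6 : 1 < b * Real.exp (-φ b) := by nlinarith
      nlinarith [hbI.1]
    have hlM : IsLocalMax (fun r => φ r - Real.log r) b := by
      apply isLocalMax_of_deriv_deriv_neg
      · rw [hdd]; exact hneg
      · rw [hde.eq_of_nhds]; exact hz
      · exact (hd1 b hbI).continuousAt
    have hconst : (fun r => φ r - Real.log r) =ᶠ[nhds b] fun _ => φ b - Real.log b := by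
      filter_upwards [hlM, hlm] with x hx hy using le_antisymm hx hy
    have : deriv (deriv (fun r => φ r - Real.log r)) b = 0 := by
      rw [hconst.deriv.deriv_eq]; simp
    linarith
  have hf0 : ∀ r ∈ Ioo (0:ℝ) 1, 0 ≤ Real.exp (φ r) - r ^ 2 * Real.exp (-φ r) := by
    intro r hr
    have h2 : r ≤ Real.exp (φ r) := by
      rw [← Real.log_le_iff_le_exp hr.1]; exact hlow r hr
    have h3 : Real.exp (φ r) * Real.exp (-φ r) = 1 := by rw [← Real.exp_add]; simp
    have h5 := Real.exp_pos (-φ r)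
    have h6 : r * Real.exp (-φ r) ≤ 1 := by nlinarith
    nlinarith [hr.1]
  have hF0 : ∀ r ∈ Ioo (0:ℝ) 1, 0 ≤ F r := fun r hr => mul_nonneg hi.le (hf0 r hr)
  have hPm : MonotoneOn (fun r => r * v r) (Ico 0 1) := by
    apply monotoneOn_of_deriv_nonneg (convex_Ico 0 1) hPc
    · rw [interior_Ico]; exact fun x hx => (hPd x hx).differentiableAt.differentiableWithinAt
    · rw [interior_Ico]; intro x hx; rw [(hPd x hx).deriv]
      exact mul_nonneg hx.1.le (hF0 x hx)
  have hP0 : ∀ r ∈ Ioo (0:ℝ) 1, 0 ≤ r * v r := by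
    intro r hr
    have := hPm ⟨le_refl 0, one_pos⟩ ⟨hr.1.le, hr.2⟩ hr.1.le
    simpa using this
  have hv0 : ∀ r ∈ Ioo (0:ℝ) 1, 0 ≤ v r := fun r hr =>
    nonneg_of_mul_nonneg_right (hP0 r hr) hr.1
  have hφm : MonotoneOn φ (Icc 0 1) := by
    apply monotoneOn_of_deriv_nonneg (convex_Icc 0 1) hc
    · rw [interior_Icc]; exact fun x hx => (hφ' x hx).differentiableAt.differentiableWithinAt
    · rw [interior_Icc]; intro x hx; rw [(hφ' x hx).deriv]
      exact hv0 x hx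
  have hφ0 : ∀ r ∈ Ioo (0:ℝ) 1, φ r ≤ 0 := by
    intro r hr
    have := hφm ⟨hr.1.le, hr.2.le⟩ ⟨zero_le_one, le_refl 1⟩ hr.2.le
    linarith
  have hf1 : ∀ r ∈ Ioo (0:ℝ) 1, F r ≤ (ε^2)⁻¹ := by
    intro r hr
    have h1 : Real.exp (φ r) ≤ 1 := Real.exp_le_one_iff.2 (hφ0 r hr)
    have h2 : 0 ≤ r^2 * Real.exp (-φ r) := by positivity
    have : Real.exp (φ r) - r ^ 2 * Real.exp (-φ r) ≤ 1 := by linarith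
    simp only [hF]
    nlinarith
  -- P ≤ 1
  have hP1 : ∀ r ∈ Ioo (0:ℝ) 1, r * v r ≤ 1 := by
    intro a ha
    by_contra! hgt
    have hm : StrictMonoOn (fun r => φ r - Real.log r) (Icc a 1) := by
      apply strictMonoOn_of_deriv_pos (convex_Icc a 1)
      · apply ContinuousOn.sub (hc.mono (Icc_subset_Icc_left ha.1.le))
        exact Real.continuousOn_log.mono (fun x hx => (lt_of_lt_of_le ha.1 hx.1).ne')
      · rw [interior_Icc]; intro x hx
        have hx' : x ∈ Ioo (0:ℝ) 1 := ⟨ha.1.trans hx.1, hx.2⟩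
        have hdx : HasDerivAt (fun r => φ r - Real.log r) (v x - x⁻¹) x :=
          (hφ' x hx').sub (Real.hasDerivAt_log hx'.1.ne')
        rw [hdx.deriv]
        have := hPm ⟨ha.1.le, ha.2⟩ ⟨hx'.1.le, hx.2⟩ hx.1.le
        simp only at this
        have h2 : 1 < x * v x := by linarith
        rw [sub_pos, inv_lt_iff_one_lt_mul₀ hx'.1]; linarith
    have := hm ⟨le_refl a, ha.2.le⟩ ⟨ha.2.le, le_refl 1⟩ ha.2
    simp [h1] at this
    linarith [hlow a ha]
  -- general integrated bound
  have hInt : ∀ (C b : ℝ), 0 < b → b < 1 → (∀ x ∈ Ioo 0 b, F x ≤ C) → b * v b ≤ C * b^2/2 := by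
    intro C b hb hb1 hC
    have hm : MonotoneOn (fun r => C * r^2/2 - r * v r) (Icc 0 b) := by
      have hd : ∀ x ∈ Ioo 0 b, HasDerivAt (fun r => C * r^2/2 - r * v r) (C * x - x * F x) x := by
        intro x hx
        have := (((hasDerivAt_pow 2 x).const_mul C).div_const 2).sub
          (hPd x ⟨hx.1, hx.2.trans hb1⟩)
        refine HasDerivAt.congr_deriv this ?_
        simp; ring
      apply monotoneOn_of_deriv_nonneg (convex_Icc 0 b)
      · apply ContinuousOn.sub (by fun_prop)
        exact hPc.mono (fun x hx => ⟨hx.1, hx.2.trans_lt hb1⟩)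
      · rw [interior_Icc]; exact fun x hx => (hd x hx).differentiableAt.differentiableWithinAt
      · rw [interior_Icc]; intro x hx; rw [(hd x hx).deriv]
        nlinarith [hC x hx, hx.1]
    have := hm ⟨le_refl 0, hb.le⟩ ⟨hb.le, le_refl b⟩ hb.le
    simp at this
    linarith
  -- φ(2ε) small
  have hsmall : Real.exp (φ (2*ε)) ≤ 1/2 := by
    by_contra! hgt
    have h2ε : 2 * ε ∈ Ioo (0:ℝ) 1 := ⟨by linarith, by linarith⟩
    have hm : MonotoneOn (fun r => r * v r - (ε^2)⁻¹ * (r^2/4 - r^4/2)) (Icc (2*ε) (1/2)) := by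
      have hd : ∀ x ∈ Ioo (2*ε) (1/2), HasDerivAt
          (fun r => r * v r - (ε^2)⁻¹ * (r^2/4 - r^4/2))
          (x * F x - (ε^2)⁻¹ * (x * (1/2 - 2 * x^2))) x := by
        intro x hx
        have := (hPd x ⟨by linarith [hx.1], by linarith [hx.2]⟩).sub
          ((((hasDerivAt_pow 2 x).div_const 4).sub
            ((hasDerivAt_pow 4 x).div_const 2)).const_mul (ε^2)⁻¹)
        refine HasDerivAt.congr_deriv this ?_
        push_cast; ring
      apply monotoneOn_of_deriv_nonneg (convex_Icc _ _)
      · apply ContinuousOn.sub _ (by fun_prop)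
        exact hPc.mono (fun x hx => ⟨by linarith [hx.1], by linarith [hx.2]⟩)
      · rw [interior_Icc]; exact fun x hx => (hd x hx).differentiableAt.differentiableWithinAt
      · rw [interior_Icc]; intro x hx; rw [(hd x hx).deriv]
        have hx0 : 0 < x := by linarith [hx.1]
        have hx1 : x < 1 := by linarith [hx.2]
        have hle : φ (2*ε) ≤ φ x := hφm ⟨h2ε.1.le, h2ε.2.le⟩ ⟨hx0.le, hx1.le⟩ hx.1.le
        have h4 : 1/2 < Real.exp (φ x) := hgt.trans_le (Real.exp_le_exp.2 hle)
        have h3 : Real.exp (φ x) * Real.exp (-φ x) = 1 := by rw [← Real.exp_add]; simp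
        have h5 := Real.exp_pos (-φ x)
        have h6 : Real.exp (-φ x) ≤ 2 := by nlinarith
        have h7 : 1/2 - 2*x^2 ≤ Real.exp (φ x) - x ^ 2 * Real.exp (-φ x) := by
          nlinarith [sq_nonneg x]
        have : 0 ≤ (ε^2)⁻¹ * (x * ((Real.exp (φ x) - x ^ 2 * Real.exp (-φ x)) - (1/2 - 2*x^2))) :=
          mul_nonneg hi.le (mul_nonneg hx0.le (by linarith))
        simp only [hF]
        linarith
    have h := hm ⟨le_refl _, by linarith⟩ ⟨by linarith, le_refl _⟩ (by linarith : 2*ε ≤ 1/2)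
    simp only at h
    have hA := hP0 _ h2ε
    have hB := hP1 (1/2) ⟨by norm_num, by norm_num⟩
    have hC : (ε^2)⁻¹ * (1/32 - (ε^2 - 8*ε^4)) ≤ 1 := by linarith
    rw [inv_mul_le_iff₀ (by positivity)] at hC
    have : ε^2 < 1/64 := by nlinarith
    nlinarith [sq_nonneg (ε^2), pow_pos hε 4]
  have hvb : ∀ r ∈ Ioo (0:ℝ) 1, v r ≤ 1/(2*ε) := by
    intro r hr
    rcases le_total r (2*ε) with h | h
    · have := hInt ((ε^2)⁻¹ * (1/2)) r hr.1 hr.2 (by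
        intro x hx
        have hx1 : x < 1 := hx.2.trans hr.2
        have hle : φ x ≤ φ (2*ε) := hφm ⟨hx.1.le, hx1.le⟩ ⟨by linarith, by linarith⟩
          (by linarith [hx.2])
        have h4 : Real.exp (φ x) ≤ 1/2 := (Real.exp_le_exp.2 hle).trans hsmall
        have h2 : 0 ≤ x^2 * Real.exp (-φ x) := by positivity
        simp only [hF]
        apply mul_le_mul_of_nonneg_left _ hi.le
        linarith)
      have h2 : v r ≤ (ε^2)⁻¹ * r / 4 := by
        apply le_of_mul_le_mul_left _ hr.1
        linarith
      have h3 : (ε^2)⁻¹ * r / 4 ≤ (ε^2)⁻¹ * (2*ε) / 4 := by gcongr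
      have h4 : (ε^2)⁻¹ * (2*ε) / 4 = 1/(2*ε) := by field_simp; norm_num
      linarith
    · have := hP1 r hr
      rw [le_div_iff₀ (by positivity)]
      nlinarith [hv0 r hr]
  intro r hr
  refine ⟨?_, ?_, ?_⟩
  · have hm : AntitoneOn (fun r => φ r - 1/(2*ε) * r) (Icc 0 1) := by
      have hd : ∀ x ∈ Ioo (0:ℝ) 1, HasDerivAt (fun r => φ r - 1/(2*ε) * r) (v x - 1/(2*ε)) x := by
        intro x hx
        have := (hφ' x hx).sub ((hasDerivAt_id x).const_mul (1/(2*ε)))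
        exact HasDerivAt.congr_deriv this (by simp)
      apply antitoneOn_of_deriv_nonpos (convex_Icc _ _)
      · exact hc.sub (by fun_prop)
      · rw [interior_Icc]; exact fun x hx => (hd x hx).differentiableAt.differentiableWithinAt
      · rw [interior_Icc]; intro x hx; rw [(hd x hx).deriv]
        linarith [hvb x hx]
    have h := hm ⟨hr.1.le, hr.2.le⟩ ⟨zero_le_one, le_refl 1⟩ hr.2.le
    simp only [h1] at h
    have hp : 0 < 1/(2*ε) := by positivity
    rw [abs_of_nonpos (hφ0 r hr)]
    nlinarith [hr.1]
  · rw [abs_of_nonneg (hv0 r hr)]; exact hvb r hr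
  · have hI := hInt ((ε^2)⁻¹) r hr.1 hr.2 (fun x hx => hf1 x ⟨hx.1, hx.2.trans hr.2⟩)
    have hA : v r / r ≤ (ε^2)⁻¹ / 2 := by
      rw [div_le_iff₀ hr.1]
      apply le_of_mul_le_mul_left _ hr.1
      linarith
    have hB : 0 ≤ v r / r := div_nonneg (hv0 r hr) hr.1.le
    have hC := hode r hr
    have hD := hF0 r hr
    have hE := hf1 r hr
    simp only [hF] at hD hE
    have hG : 3 / (2*ε^2) = 3/2 * (ε^2)⁻¹ := by field_simp
    rw [hG, abs_le]
    constructor <;> linarith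

lemma norm_hasFDeriv (x : EuclideanSpace ℝ (Fin 2)) (hx : x ≠ 0) (h : ℝ → ℝ) (h' : ℝ)
    (hh : HasDerivAt h h' ‖x‖) (i : Fin 2) :
    DifferentiableAt ℝ (fun y : EuclideanSpace ℝ (Fin 2) => h ‖y‖) x ∧
    fderiv ℝ (fun y : EuclideanSpace ℝ (Fin 2) => h ‖y‖) x (EuclideanSpace.single i 1)
      = h' * (x i / ‖x‖) := by
  have hn : 0 < ‖x‖ := norm_pos_iff.2 hx
  have h1 : HasFDerivAt (fun y : EuclideanSpace ℝ (Fin 2) => ‖y‖^2)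
      (2 • (innerSL ℝ x)) x := (hasStrictFDerivAt_norm_sq x).hasFDerivAt
  have h2 : HasFDerivAt (fun y : EuclideanSpace ℝ (Fin 2) => Real.sqrt (‖y‖^2)) _ x :=
    h1.sqrt (by positivity)
  have h3 : (fun y : EuclideanSpace ℝ (Fin 2) => Real.sqrt (‖y‖^2)) = fun y => ‖y‖ := by
    funext y; exact Real.sqrt_sq (norm_nonneg _)
  rw [h3] at h2
  have h4 := hh.comp_hasFDerivAt x h2
  refine ⟨h4.differentiableAt, ?_⟩
  have h5 : fderiv ℝ (fun y : EuclideanSpace ℝ (Fin 2) => h ‖y‖) x = _ := h4.fderiv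
  rw [h5]
  simp [EuclideanSpace.inner_single_right]
  left
  field_simp

lemma lap_radial (u : EuclideanSpace ℝ (Fin 2) → ℝ) (φ v k : ℝ → ℝ)
    (hu : ∀ x ∈ ball (0 : EuclideanSpace ℝ (Fin 2)) 1, u x = φ ‖x‖)
    (hφ : ∀ t ∈ Ioo (0 : ℝ) 1, HasDerivAt φ (v t) t)
    (hk : ∀ r ∈ Ioo (0 : ℝ) 1, HasDerivAt v (k r) r)
    (x : EuclideanSpace ℝ (Fin 2)) (hx0 : x ≠ 0) (hx1 : ‖x‖ < 1) :
    laplacian2 u x = k ‖x‖ + v ‖x‖ / ‖x‖ := by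
  have hn : 0 < ‖x‖ := norm_pos_iff.2 hx0
  have hopen : ∀ y : EuclideanSpace ℝ (Fin 2), ‖y‖ < 1 → ∀ᶠ z in nhds y, ‖z‖ < 1 :=
    fun y hy => (isOpen_lt continuous_norm continuous_const).mem_nhds hy
  have h1 : ∀ i : Fin 2, ∀ y : EuclideanSpace ℝ (Fin 2), y ≠ 0 → ‖y‖ < 1 →
      fderiv ℝ u y (EuclideanSpace.single i 1) = (v ‖y‖ / ‖y‖) * y i := by
    intro i y hy0 hy1
    have he : u =ᶠ[nhds y] fun y => φ ‖y‖ := by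
      filter_upwards [hopen y hy1] with z hz
      exact hu z (by simpa using hz)
    rw [he.fderiv_eq, (norm_hasFDeriv y hy0 φ _ (hφ _ ⟨norm_pos_iff.2 hy0, hy1⟩) i).2]
    ring
  have h2 : ∀ i : Fin 2,
      fderiv ℝ (fun y => fderiv ℝ u y (EuclideanSpace.single i 1)) x (EuclideanSpace.single i 1)
      = (k ‖x‖ * ‖x‖ - v ‖x‖) / ‖x‖^2 * (x i / ‖x‖) * x i + v ‖x‖ / ‖x‖ := by
    intro i
    have he : (fun y => fderiv ℝ u y (EuclideanSpace.single i 1)) =ᶠ[nhds x]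
        fun y => (fun r => v r / r) ‖y‖ * y i := by
      filter_upwards [hopen x hx1, isOpen_ne.mem_nhds hx0] with z hz hz0
      exact h1 i z hz0 hz
    have hG : HasDerivAt (fun r => v r / r) ((k ‖x‖ * ‖x‖ - v ‖x‖) / ‖x‖^2) ‖x‖ := by
      have := (hk _ ⟨hn, hx1⟩).div (hasDerivAt_id ‖x‖) hn.ne'
      exact HasDerivAt.congr_deriv this (by simp)
    obtain ⟨ha, hb⟩ := norm_hasFDeriv x hx0 _ _ hG i
    have hc : HasFDerivAt (fun y : EuclideanSpace ℝ (Fin 2) => y i)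
        (EuclideanSpace.proj i : EuclideanSpace ℝ (Fin 2) →L[ℝ] ℝ) x :=
      (EuclideanSpace.proj i : EuclideanSpace ℝ (Fin 2) →L[ℝ] ℝ).hasFDerivAt
    have hm := ha.hasFDerivAt.mul hc
    rw [he.fderiv_eq]
    have hm' : fderiv ℝ (fun y : EuclideanSpace ℝ (Fin 2) =>
        (fun r => v r / r) ‖y‖ * y i) x = _ := hm.fderiv
    rw [hm']
    simp only [add_apply, smul_apply, hb]
    simp
    ring
  have h3 : ‖x‖^2 = x 0 ^2 + x 1 ^2 := by
    rw [EuclideanSpace.norm_sq_eq]; simp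
  unfold laplacian2
  rw [Fin.sum_univ_two, h2, h2]
  have h4 : (k ‖x‖ * ‖x‖ - v ‖x‖) / ‖x‖^2 * (x 0 / ‖x‖) * x 0 + v ‖x‖ / ‖x‖ +
    ((k ‖x‖ * ‖x‖ - v ‖x‖) / ‖x‖^2 * (x 1 / ‖x‖) * x 1 + v ‖x‖ / ‖x‖)
     = (k ‖x‖ * ‖x‖ - v ‖x‖) / ‖x‖^2 / ‖x‖ * (x 0 ^2 + x 1 ^2) + 2 * (v ‖x‖ / ‖x‖) := by ring
  rw [h4, ← h3]
  field_simp
  ring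

/-- for `0 < ε < 1/8`, the unique radially symmetric solution `ū_ε`
(with radial profile `g`) satisfies, for all `0 < r < 1`:
`|ū_ε(r)| ≤ 1/(2ε)`, `|ū_ε'(r)| ≤ 1/(2ε)`, and `|ū_ε''(r)| ≤ 3/(2ε²)`. -/
theorem stmt_10 (ε : ℝ) (hε : 0 < ε) (hε8 : ε < 1/8)
    (u : EuclideanSpace ℝ (Fin 2) → ℝ) (g : ℝ → ℝ)
    (hu : IsDirichletSol ε u)
    (hrad : ∀ x ∈ closedBall (0 : EuclideanSpace ℝ (Fin 2)) 1, u x = g ‖x‖) :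
    ∀ r ∈ Ioo (0 : ℝ) 1,
      |g r| ≤ 1 / (2 * ε) ∧
      |deriv g r| ≤ 1 / (2 * ε) ∧
      |deriv (deriv g) r| ≤ 3 / (2 * ε ^ 2) := by
  obtain ⟨hc, hs, hpde, hbd⟩ := hu
  set e : EuclideanSpace ℝ (Fin 2) := EuclideanSpace.single 0 1 with he
  have hen : ‖e‖ = 1 := by simp [he]
  have hnorm : ∀ t : ℝ, ‖t • e‖ = |t| := by intro t; rw [norm_smul, hen]; simp
  set φ : ℝ → ℝ := fun t => u (t • e) with hφd
  have hφg : ∀ t ∈ Icc (0:ℝ) 1, φ t = g t := by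
    intro t ht
    have hn : ‖t • e‖ = t := by rw [hnorm, abs_of_nonneg ht.1]
    have := hrad (t • e) (by simp only [mem_closedBall_zero_iff, hn]; exact ht.2)
    rw [hn] at this; exact this
  have hsm : ContDiffOn ℝ (⊤ : ℕ∞) φ (Ioo (-1) 1) := by
    apply hs.comp (by fun_prop : ContDiff ℝ (⊤ : ℕ∞) fun t : ℝ => t • e).contDiffOn
    intro t ht
    simp only [mem_ball_zero_iff, hnorm]
    exact abs_lt.2 ht
  have hdsm : ContDiffOn ℝ (⊤ : ℕ∞) (deriv φ) (Ioo (-1) 1) :=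
    hsm.deriv_of_isOpen isOpen_Ioo (by simp)
  have hφ : ∀ t ∈ Ioo (-1:ℝ) 1, HasDerivAt φ (deriv φ t) t := fun t ht =>
    ((hsm.differentiableOn (by simp)).differentiableAt (Ioo_mem_nhds ht.1 ht.2)).hasDerivAt
  have hk : ∀ t ∈ Ioo (-1:ℝ) 1, HasDerivAt (deriv φ) (deriv (deriv φ) t) t := fun t ht =>
    ((hdsm.differentiableOn (by simp)).differentiableAt (Ioo_mem_nhds ht.1 ht.2)).hasDerivAt
  have hsub : Ioo (0:ℝ) 1 ⊆ Ioo (-1) 1 := fun t ht => ⟨by linarith [ht.1], ht.2⟩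
  have main := ode_core ε hε hε8 φ (deriv φ) (deriv (deriv φ))
    (by
      apply hc.comp (by fun_prop)
      intro t ht
      simp only [mem_closedBall_zero_iff, hnorm]
      rw [abs_of_nonneg ht.1]; exact ht.2)
    (hbd _ (by simp [hen])) hφ hdsm.continuousOn (fun t ht => hk t (hsub ht))
    (by
      intro r hr
      have hn : ‖r • e‖ = r := by rw [hnorm, abs_of_pos hr.1]
      have hl := lap_radial u φ (deriv φ) (deriv (deriv φ))
        (by
          intro x hx
          have hx' : ‖x‖ < 1 := by simpa using hx
          rw [hφg _ ⟨norm_nonneg x, hx'.le⟩]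
          exact hrad x (ball_subset_closedBall hx))
        (fun t ht => hφ t (hsub ht)) (fun t ht => hk t (hsub ht)) (r • e)
        (by rw [← norm_pos_iff, hn]; exact hr.1) (by rw [hn]; exact hr.2)
      have hp := hpde (r • e) (by simp only [mem_ball_zero_iff, hn]; exact hr.2)
      rw [hl, hn] at hp
      exact hp)
  intro r hr
  have hev : φ =ᶠ[nhds r] g := by
    filter_upwards [Ioo_mem_nhds hr.1 hr.2] with t ht using hφg t ⟨ht.1.le, ht.2.le⟩
  obtain ⟨m1, m2, m3⟩ := main r hr
  rw [← hev.eq_of_nhds, ← hev.deriv_eq, ← hev.deriv.deriv_eq]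
  exact ⟨m1, m2, m3⟩
end

section
/- For every 0 < R ≤ 1 and every integer k ≥ 0 there exists a constant C = C(R, k) such that for all sufficiently small ε > 0, the C^k norm of ū_ε on B_R(0) (the supremum over B_R(0) of the absolute values of all partial derivatives of ū_ε of order at most k) is at most C·ε^{−k−2}. -/
open Real Set Metric

open Filter Topology

lemma second_deriv_nonpos_of_localMax {g : ℝ → ℝ} {a : ℝ} (hm : IsLocalMax g a)
    (hc : ContinuousAt g a) : deriv (deriv g) a ≤ 0 := by
  by_contra h
  push Not at h
  have h1 := isLocalMin_of_deriv_deriv_pos h hm.deriv_eq_zero hc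
  have h2 : g =ᶠ[𝓝 a] fun _ => g a := by
    filter_upwards [hm, h1] with x hx hx'
    exact le_antisymm hx hx'
  have h3 : deriv (deriv g) a = 0 := by
    rw [h2.deriv.deriv_eq]
    simp
  linarith

lemma second_deriv_nonneg_of_localMin {g : ℝ → ℝ} {a : ℝ} (hm : IsLocalMin g a)
    (hc : ContinuousAt g a) : 0 ≤ deriv (deriv g) a := by
  by_contra h
  push Not at h
  have h1 := isLocalMax_of_deriv_deriv_neg h hm.deriv_eq_zero hc
  have h2 : g =ᶠ[𝓝 a] fun _ => g a := by
    filter_upwards [hm, h1] with x hx hx'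
    exact le_antisymm hx' hx
  have h3 : deriv (deriv g) a = 0 := by
    rw [h2.deriv.deriv_eq]
    simp
  linarith

lemma mono_lim {A A' : ℝ → ℝ} {b : ℝ} (hA : ∀ t ∈ Ioo 0 b, HasDerivAt A (A' t) t)
    (hA' : ∀ t ∈ Ioo 0 b, 0 ≤ A' t) (hl : Tendsto A (𝓝[>] 0) (𝓝 0)) :
    ∀ t ∈ Ioo 0 b, 0 ≤ A t := by
  have hm : MonotoneOn A (Ioo 0 b) := by
    apply monotoneOn_of_deriv_nonneg (convex_Ioo 0 b)
    · intro t ht; exact (hA t ht).continuousAt.continuousWithinAt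
    · rw [interior_Ioo]; intro t ht; exact (hA t ht).differentiableAt.differentiableWithinAt
    · rw [interior_Ioo]; intro t ht; rw [(hA t ht).deriv]; exact hA' t ht
  intro t ht
  apply le_of_tendsto hl
  filter_upwards [Ioo_mem_nhdsGT ht.1] with s hs
  exact hm ⟨hs.1, hs.2.trans ht.2⟩ ht hs.2.le

noncomputable def HH (ε : ℝ) (φ : ℝ → ℝ) (t : ℝ) : ℝ :=
  (ε ^ 2)⁻¹ / 4 * (Real.exp (φ t) - t * Real.exp (-φ t))

structure Prof (ε : ℝ) (φ : ℝ → ℝ) : Prop where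
  pos : 0 < ε
  lt1 : ε < 1
  smooth : ContDiffOn ℝ (⊤ : ℕ∞) φ (Ioo 0 1)
  cont : ContinuousOn φ (Icc 0 1)
  nonpos : ∀ t ∈ Ioo (0:ℝ) 1, φ t ≤ 0
  bdry : φ 1 = 0
  ode : ∀ t ∈ Ioo (0:ℝ) 1, t * deriv (deriv φ) t + deriv φ t = HH ε φ t
  lim : Tendsto (fun t => t * deriv φ t) (𝓝[>] 0) (𝓝 0)

namespace Prof
variable {ε : ℝ} {φ : ℝ → ℝ}

lemma cda (h : Prof ε φ) {t : ℝ} (ht : t ∈ Ioo (0:ℝ) 1) : ContDiffAt ℝ (⊤ : ℕ∞) φ t :=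
  h.smooth.contDiffAt (isOpen_Ioo.mem_nhds ht)

lemma hda (h : Prof ε φ) {t : ℝ} (ht : t ∈ Ioo (0:ℝ) 1) (n : ℕ) :
    HasDerivAt (iteratedDeriv n φ) (iteratedDeriv (n+1) φ t) t := by
  rw [iteratedDeriv_succ]
  apply DifferentiableAt.hasDerivAt
  have h1 := (h.cda ht).differentiableAt_iteratedFDeriv (m := n) (by exact_mod_cast ENat.natCast_lt_top n)
  rw [iteratedDeriv_eq_equiv_comp]
  exact (LinearIsometryEquiv.differentiable _).differentiableAt.comp t h1

lemma hd0 (h : Prof ε φ) {t : ℝ} (ht : t ∈ Ioo (0:ℝ) 1) : HasDerivAt φ (deriv φ t) t := by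
  simpa using h.hda ht 0

lemma hd1 (h : Prof ε φ) {t : ℝ} (ht : t ∈ Ioo (0:ℝ) 1) :
    HasDerivAt (deriv φ) (deriv (deriv φ) t) t := by
  simpa [iteratedDeriv_succ] using h.hda ht 1

lemma hdp (h : Prof ε φ) {t : ℝ} (ht : t ∈ Ioo (0:ℝ) 1) :
    HasDerivAt (fun t => t * deriv φ t) (HH ε φ t) t := by
  have := (hasDerivAt_id' t).mul (h.hd1 ht)
  have e : HH ε φ t = 1 * deriv φ t + t * deriv (deriv φ) t := by rw [← h.ode t ht]; ring
  rw [e]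
  exact this

lemma ge_log (h : Prof ε φ) {t : ℝ} (ht : t ∈ Ioo (0:ℝ) 1) : Real.log t / 2 ≤ φ t := by
  by_contra hcon
  push Not at hcon
  set w : ℝ → ℝ := fun s => φ s - Real.log s / 2 with hw
  -- near zero w is positive
  have hc0 : Tendsto φ (𝓝[>] 0) (𝓝 (φ 0)) := by
    have := h.cont 0 (by simp)
    exact this.mono_left (by
      rw [nhdsWithin_le_iff]
      filter_upwards [Ioo_mem_nhdsGT (zero_lt_one' ℝ)] with s hs
      exact ⟨hs.1.le, hs.2.le⟩)
  have hlog : Tendsto (fun s => Real.log s) (𝓝[>] 0) atBot := Real.tendsto_log_nhdsGT_zero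
  have h1 : ∀ᶠ s in 𝓝[>] (0:ℝ), φ 0 - 1 < φ s := hc0.eventually (lt_mem_nhds (by linarith))
  have h2 : ∀ᶠ s in 𝓝[>] (0:ℝ), Real.log s < 2 * (φ 0 - 1) := hlog.eventually (eventually_lt_atBot _)
  obtain ⟨a, ha1, ha2, ha3⟩ := (h1.and (h2.and (Ioo_mem_nhdsGT ht.1))).exists
  have hwc : ContinuousOn w (Icc a 1) := by
    apply ContinuousOn.sub
    · exact h.cont.mono (Icc_subset_Icc_left ha3.1.le)
    · apply ContinuousOn.div_const
      apply Real.continuousOn_log.mono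
      intro s hs
      have : 0 < s := ha3.1.trans_le hs.1
      simpa using this.ne'
  obtain ⟨m, hm, hmin⟩ := isCompact_Icc.exists_isMinOn (nonempty_Icc.2 (ha3.2.trans ht.2).le) hwc
  have hwm : w m < 0 := by
    have := hmin (show t ∈ Icc a 1 from ⟨ha3.2.le, ht.2.le⟩)
    simp only [mem_ofPred_eq] at this
    have : w t < 0 := by simp only [hw]; linarith
    linarith
  have hma : m ≠ a := by
    rintro rfl
    simp only [hw] at hwm
    linarith
  have hm1 : m ≠ 1 := by
    rintro rfl
    simp only [hw, h.bdry] at hwm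
    simp at hwm
  have hmI : m ∈ Ioo a 1 := ⟨lt_of_le_of_ne hm.1 hma.symm, lt_of_le_of_ne hm.2 hm1⟩
  have hm01 : m ∈ Ioo (0:ℝ) 1 := ⟨ha3.1.trans hmI.1, hmI.2⟩
  have hlm : IsLocalMin w m := hmin.isLocalMin (Icc_mem_nhds hmI.1 hmI.2)
  have hdw : ∀ s ∈ Ioo (0:ℝ) 1, HasDerivAt w (deriv φ s - s⁻¹ / 2) s := by
    intro s hs
    exact (h.hd0 hs).sub ((Real.hasDerivAt_log hs.1.ne').div_const 2)
  have hd2 : HasDerivAt (deriv w) (deriv (deriv φ) m - (-(m ^ 2)⁻¹) / 2) m := by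
    have : deriv w =ᶠ[𝓝 m] fun s => deriv φ s - s⁻¹ / 2 := by
      filter_upwards [isOpen_Ioo.mem_nhds hm01] with s hs using (hdw s hs).deriv
    refine HasDerivAt.congr_of_eventuallyEq ?_ this
    exact (h.hd1 hm01).sub ((hasDerivAt_inv hm01.1.ne').div_const 2)
  have hnn := second_deriv_nonneg_of_localMin hlm (hdw m hm01).continuousAt
  rw [hd2.deriv] at hnn
  have hz := hlm.hasDerivAt_eq_zero (hdw m hm01)
  have hode := h.ode m hm01
  have hH : HH ε φ m < 0 := by
    unfold HH
    have : 0 < (ε ^ 2)⁻¹ / 4 := by have := h.pos; positivity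
    apply mul_neg_of_pos_of_neg this
    have hlt : Real.exp (φ m) < m * Real.exp (-φ m) := by
      nth_rewrite 2 [← Real.exp_log hm01.1]
      rw [← Real.exp_add]
      apply Real.exp_lt_exp.2
      simp only [hw] at hwm
      linarith
    linarith
  have hm0 := hm01.1
  have h5 : 0 ≤ m * (deriv (deriv φ) m - (-(m ^ 2)⁻¹) / 2) := mul_nonneg hm0.le hnn
  have h6 : m * (deriv (deriv φ) m - (-(m ^ 2)⁻¹) / 2) = m * deriv (deriv φ) m + m⁻¹ / 2 := by
    field_simp
    try ring
  linarith

lemma HH_nonneg (h : Prof ε φ) {t : ℝ} (ht : t ∈ Ioo (0:ℝ) 1) : 0 ≤ HH ε φ t := by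
  unfold HH
  have h1 : 0 < (ε ^ 2)⁻¹ / 4 := by have := h.pos; positivity
  apply mul_nonneg h1.le
  have : t * Real.exp (-φ t) ≤ Real.exp (φ t) := by
    nth_rewrite 1 [← Real.exp_log ht.1]
    rw [← Real.exp_add]
    apply Real.exp_le_exp.2
    have := h.ge_log ht
    linarith
  linarith

lemma HH_le' (h : Prof ε φ) {t : ℝ} (ht : t ∈ Ioo (0:ℝ) 1) :
    HH ε φ t ≤ (ε ^ 2)⁻¹ / 4 * Real.exp (φ t) := by
  unfold HH
  have h1 : 0 < (ε ^ 2)⁻¹ / 4 := by have := h.pos; positivity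
  apply mul_le_mul_of_nonneg_left _ h1.le
  have := mul_pos ht.1 (Real.exp_pos (-φ t))
  linarith

lemma HH_le (h : Prof ε φ) {t : ℝ} (ht : t ∈ Ioo (0:ℝ) 1) :
    HH ε φ t ≤ (ε ^ 2)⁻¹ / 4 := by
  have h1 : 0 < (ε ^ 2)⁻¹ / 4 := by have := h.pos; positivity
  refine (h.HH_le' ht).trans ?_
  have : Real.exp (φ t) ≤ 1 := Real.exp_le_one_iff.2 (h.nonpos t ht)
  nlinarith

lemma d_nonneg (h : Prof ε φ) {t : ℝ} (ht : t ∈ Ioo (0:ℝ) 1) : 0 ≤ deriv φ t := by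
  have := mono_lim (fun s hs => h.hdp hs) (fun s hs => h.HH_nonneg hs) h.lim t ht
  exact nonneg_of_mul_nonneg_right this ht.1

lemma d_le (h : Prof ε φ) {t : ℝ} (ht : t ∈ Ioo (0:ℝ) 1) : deriv φ t ≤ (ε ^ 2)⁻¹ / 4 := by
  have := mono_lim (A := fun s => (ε ^ 2)⁻¹ / 4 * s - s * deriv φ s)
    (fun s hs => ((hasDerivAt_id' s).const_mul ((ε ^ 2)⁻¹ / 4)).sub (h.hdp hs))
    (fun s hs => by have := h.HH_le hs; linarith) (by
      have h1 : Tendsto (fun s : ℝ => (ε ^ 2)⁻¹ / 4 * s) (𝓝[>] 0) (𝓝 0) := by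
        have : Continuous (fun s : ℝ => (ε ^ 2)⁻¹ / 4 * s) := by fun_prop
        simpa using (this.tendsto 0).mono_left nhdsWithin_le_nhds
      simpa using h1.sub h.lim) t ht
  have h2 : 0 ≤ t * ((ε ^ 2)⁻¹ / 4 - deriv φ t) := by linarith
  have := nonneg_of_mul_nonneg_right h2 ht.1
  linarith

lemma mono (h : Prof ε φ) : MonotoneOn φ (Ioo 0 1) := by
  apply monotoneOn_of_deriv_nonneg (convex_Ioo 0 1)
  · intro t ht; exact (h.hd0 ht).continuousAt.continuousWithinAt
  · rw [interior_Ioo]; intro t ht; exact (h.hd0 ht).differentiableAt.differentiableWithinAt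
  · rw [interior_Ioo]; intro t ht; exact h.d_nonneg ht

lemma ge_logeps (h : Prof ε φ) {t : ℝ} (ht : t ∈ Ioo (0:ℝ) 1) : Real.log ε - 1/4 ≤ φ t := by
  have hε := h.pos
  have hl : Real.log (ε ^ 2) / 2 = Real.log ε := by rw [Real.log_pow]; push_cast; ring
  rcases le_or_gt (ε ^ 2) t with hc | hc
  · have := h.ge_log ht
    have h2 := Real.log_le_log (by positivity) hc
    linarith
  · have hI : ε ^ 2 ∈ Ioo (0:ℝ) 1 := ⟨by positivity, by have := h.lt1; nlinarith⟩
    have h1 := h.ge_log hI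
    have hm : MonotoneOn (fun s => (ε ^ 2)⁻¹ / 4 * s - φ s) (Ioo 0 1) := by
      have hd : ∀ s ∈ Ioo (0:ℝ) 1, HasDerivAt (fun s => (ε ^ 2)⁻¹ / 4 * s - φ s)
        ((ε ^ 2)⁻¹ / 4 * 1 - deriv φ s) s := fun s hs =>
          ((hasDerivAt_id' s).const_mul ((ε ^ 2)⁻¹ / 4)).sub (h.hd0 hs)
      apply monotoneOn_of_deriv_nonneg (convex_Ioo 0 1)
      · intro t ht; exact (hd t ht).continuousAt.continuousWithinAt
      · rw [interior_Ioo]; intro t ht; exact (hd t ht).differentiableAt.differentiableWithinAt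
      · rw [interior_Ioo]; intro t ht; rw [(hd t ht).deriv]; have := h.d_le ht; linarith
    have := hm ht hI hc.le
    simp only at this
    have h3 : (ε ^ 2)⁻¹ / 4 * ε ^ 2 = 1/4 := by field_simp
    have h4 : 0 < (ε ^ 2)⁻¹ / 4 * t := by have := ht.1; positivity
    linarith

lemma exp_neg_le (h : Prof ε φ) {t : ℝ} (ht : t ∈ Ioo (0:ℝ) 1) :
    Real.exp (-φ t) ≤ 2 / √(ε ^ 2 + t) := by
  have hε := h.pos
  have ht0 := ht.1
  have hs : 0 < √(ε ^ 2 + t) := Real.sqrt_pos.2 (by positivity)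
  rw [le_div_iff₀ hs]
  have hp := Real.exp_pos (-φ t)
  apply abs_le_of_sq_le_sq' _ (by norm_num) |>.2
  rw [mul_pow, Real.sq_sqrt (by positivity)]
  rcases le_or_gt (ε ^ 2) t with hc | hc
  · have h1 : Real.exp (-φ t) ^ 2 ≤ t⁻¹ := by
      rw [← Real.exp_nat_mul, ← Real.exp_log (inv_pos.2 ht0)]
      apply Real.exp_le_exp.2
      rw [Real.log_inv]
      have := h.ge_log ht
      push_cast; linarith
    calc _ ≤ t⁻¹ * (t + t) := by gcongr
      _ ≤ _ := by field_simp; norm_num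
  · have h1 : Real.exp (-φ t) ^ 2 ≤ 2 * (ε ^ 2)⁻¹ := by
      have h2 : Real.exp (-φ t) ^ 2 ≤ Real.exp (1/2) * (ε ^ 2)⁻¹ := by
        rw [← Real.exp_nat_mul, ← Real.exp_log (show 0 < (ε ^ 2)⁻¹ by positivity), ← Real.exp_add]
        apply Real.exp_le_exp.2
        rw [Real.log_inv, Real.log_pow]
        have := h.ge_logeps ht
        push_cast; linarith
      have h3 : Real.exp (1/2) ≤ 2 := by
        have := Real.exp_one_lt_d9
        have h4 : Real.exp (1/2) ^ 2 = Real.exp 1 := by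
          rw [← Real.exp_nat_mul]; norm_num
        nlinarith [Real.exp_pos (1/2)]
      refine h2.trans ?_
      gcongr
    calc _ ≤ 2 * (ε ^ 2)⁻¹ * (ε ^ 2 + ε ^ 2) := by gcongr
      _ ≤ _ := by field_simp; norm_num

lemma abs_le (h : Prof ε φ) {t : ℝ} (ht : t ∈ Ioo (0:ℝ) 1) : |φ t| ≤ (ε ^ 2)⁻¹ := by
  have hε := h.pos
  have h1 := h.ge_logeps ht
  have h2 := Real.log_le_sub_one_of_pos (inv_pos.2 hε)
  rw [Real.log_inv] at h2
  rw [abs_of_nonpos (h.nonpos t ht)]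
  have h3 : 1 ≤ ε⁻¹ := (one_le_inv₀ hε).2 h.lt1.le
  have : (ε ^ 2)⁻¹ = ε⁻¹ * ε⁻¹ := by rw [← inv_pow, sq]
  nlinarith

lemma d_sq (h : Prof ε φ) {t : ℝ} (ht : t ∈ Ioo (0:ℝ) 1) :
    (t * deriv φ t) ^ 2 ≤ (ε ^ 2)⁻¹ / 2 * t := by
  have hε := h.pos
  have hl : Tendsto (fun s => (ε ^ 2)⁻¹ / 2 * (s * Real.exp (φ s)) - (s * deriv φ s) ^ 2)
      (𝓝[>] 0) (𝓝 0) := by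
    have hc0 : Tendsto φ (𝓝[>] 0) (𝓝 (φ 0)) := by
      have := h.cont 0 (by simp)
      exact this.mono_left (by
        rw [nhdsWithin_le_iff]
        filter_upwards [Ioo_mem_nhdsGT (zero_lt_one' ℝ)] with s hs
        exact ⟨hs.1.le, hs.2.le⟩)
    have h1 : Tendsto (fun s : ℝ => s) (𝓝[>] 0) (𝓝 0) := tendsto_id.mono_left nhdsWithin_le_nhds
    have h2 := (h1.mul ((Real.continuous_exp.tendsto _).comp hc0)).const_mul ((ε ^ 2)⁻¹ / 2)
    simpa using h2.sub (h.lim.pow 2)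
  have := mono_lim (fun s hs => (((hasDerivAt_id' s).mul (h.hd0 hs).exp).const_mul
    ((ε ^ 2)⁻¹ / 2)).sub ((h.hdp hs).pow 2)) (fun s hs => by
      have h1 := h.HH_le' hs
      have h2 := mul_nonneg hs.1.le (h.d_nonneg hs)
      have h3 := mul_le_mul_of_nonneg_left h1 h2
      have h4 : 0 ≤ (ε ^ 2)⁻¹ / 2 * Real.exp (φ s) := by positivity
      simp only [Nat.cast_ofNat, Nat.add_one_sub_one, pow_one]
      nlinarith) hl t ht
  have h5 : Real.exp (φ t) ≤ 1 := Real.exp_le_one_iff.2 (h.nonpos t ht)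
  have h6 : (ε ^ 2)⁻¹ / 2 * (t * Real.exp (φ t)) ≤ (ε ^ 2)⁻¹ / 2 * t := by
    apply mul_le_mul_of_nonneg_left _ (by positivity)
    nlinarith [ht.1]
  simp only [Pi.sub_apply, Pi.pow_apply, Pi.mul_apply] at this
  linarith

end Prof

lemma hda_gen {f : ℝ → ℝ} (hf : ContDiffOn ℝ (⊤ : ℕ∞) f (Ioo 0 1)) {t : ℝ} (ht : t ∈ Ioo (0:ℝ) 1)
    (n : ℕ) : HasDerivAt (iteratedDeriv n f) (iteratedDeriv (n+1) f t) t := by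
  rw [iteratedDeriv_succ]
  apply DifferentiableAt.hasDerivAt
  have h1 := (hf.contDiffAt (isOpen_Ioo.mem_nhds ht)).differentiableAt_iteratedFDeriv (m := n)
    (by exact_mod_cast ENat.natCast_lt_top n)
  rw [iteratedDeriv_eq_equiv_comp]
  exact (LinearIsometryEquiv.differentiable _).differentiableAt.comp t h1

lemma abs_itd {f : ℝ → ℝ} {t : ℝ} (ht : t ∈ Ioo (0:ℝ) 1) (n : ℕ) :
    ‖iteratedFDerivWithin ℝ n f (Ioo 0 1) t‖ = |iteratedDeriv n f t| := by
  rw [iteratedFDerivWithin_of_isOpen n isOpen_Ioo ht, norm_iteratedFDeriv_eq_norm_iteratedDeriv,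
    Real.norm_eq_abs]

lemma exp_comp_bound {f : ℝ → ℝ} (hf : ContDiffOn ℝ (⊤ : ℕ∞) f (Ioo 0 1)) {t : ℝ}
    (ht : t ∈ Ioo (0:ℝ) 1) (n : ℕ) {B : ℝ}
    (hB : ∀ j, 1 ≤ j → j ≤ n → |iteratedDeriv j f t| ≤ B ^ j) :
    |iteratedDeriv n (fun s => Real.exp (f s)) t| ≤ n.factorial * Real.exp (f t) * B ^ n := by
  have := norm_iteratedFDerivWithin_comp_le (𝕜 := ℝ) (g := Real.exp) (f := f) (n := n)
    (s := Ioo 0 1) (t := univ) (x := t) (N := ((⊤ : ℕ∞) : WithTop ℕ∞)) (C := Real.exp (f t)) (D := B)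
    Real.contDiff_exp.contDiffOn hf (by exact_mod_cast le_top) uniqueDiffOn_univ
    isOpen_Ioo.uniqueDiffOn (mapsTo_univ _ _) ht (by
      intro i _
      rw [iteratedFDerivWithin_univ, norm_iteratedFDeriv_eq_norm_iteratedDeriv,
        iteratedDeriv_eq_iterate, iter_deriv_exp, Real.norm_eq_abs, abs_of_pos (Real.exp_pos _)])
    (by
      intro i hi hin
      rw [abs_itd ht]
      exact hB i hi hin)
  rw [abs_itd ht] at this
  exact this

noncomputable def lam (ε t : ℝ) : ℝ := ε * √(ε ^ 2 + t)

lemma lam_pos {ε t : ℝ} (hε : 0 < ε) (ht : 0 < t) : 0 < lam ε t := by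
  unfold lam; positivity

lemma lam_sq {ε t : ℝ} (ht : 0 < t) : lam ε t ^ 2 = ε ^ 2 * (ε ^ 2 + t) := by
  unfold lam; rw [mul_pow, Real.sq_sqrt (by positivity)]

lemma le_lam {ε t : ℝ} (hε : 0 < ε) (ht : 0 < t) : ε ^ 2 ≤ lam ε t := by
  apply le_of_sq_le_sq _ (lam_pos hε ht).le
  rw [lam_sq ht]
  have : 0 < ε ^ 2 := by positivity
  nlinarith

lemma lam_le {ε t : ℝ} (hε : 0 < ε) (ht : 0 < t) (hc : t ≤ ε ^ 2) : lam ε t ≤ 2 * ε ^ 2 := by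
  apply le_of_sq_le_sq _ (by positivity)
  rw [lam_sq ht]
  have : 0 < ε ^ 2 := by positivity
  nlinarith

namespace Prof
variable {ε : ℝ} {φ : ℝ → ℝ}

lemma smoothE (h : Prof ε φ) : ContDiffOn ℝ (⊤ : ℕ∞) (fun s => Real.exp (-φ s)) (Ioo 0 1) :=
  h.smooth.neg.exp

lemma smoothH (h : Prof ε φ) : ContDiffOn ℝ (⊤ : ℕ∞) (HH ε φ) (Ioo 0 1) := by
  unfold HH
  exact contDiffOn_const.mul (h.smooth.exp.sub (contDiffOn_id.mul h.smoothE))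

lemma recur (h : Prof ε φ) (n : ℕ) : ∀ t ∈ Ioo (0:ℝ) 1,
    t * iteratedDeriv (n+2) φ t + (n+1) * iteratedDeriv (n+1) φ t = iteratedDeriv n (HH ε φ) t := by
  induction n with
  | zero =>
    intro t ht
    have := h.ode t ht
    simpa [iteratedDeriv_succ] using this
  | succ n ih =>
    intro t ht
    have h1 := hda_gen h.smoothH ht n
    have h2 : HasDerivAt (fun t => t * iteratedDeriv (n+2) φ t + (n+1) * iteratedDeriv (n+1) φ t)
        (1 * iteratedDeriv (n+2) φ t + t * iteratedDeriv (n+3) φ t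
          + (n+1) * iteratedDeriv (n+2) φ t) t :=
      ((hasDerivAt_id' t).mul (h.hda ht (n+2))).add ((h.hda ht (n+1)).const_mul _)
    have h3 := h2.congr_of_eventuallyEq (f₁ := iteratedDeriv n (HH ε φ)) (by
      filter_upwards [isOpen_Ioo.mem_nhds ht] with s hs using (ih s hs).symm)
    rw [h1.unique h3]
    push_cast
    ring

lemma H_bound (h : Prof ε φ) (n : ℕ) {t : ℝ} (ht : t ∈ Ioo (0:ℝ) 1) {K : ℝ} (hK : 1 ≤ K)
    (hB : ∀ j, 1 ≤ j → j ≤ n → |iteratedDeriv j φ t| ≤ (K / lam ε t) ^ j) :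
    |iteratedDeriv n (HH ε φ) t| ≤
      (2 ^ (n+1) * n.factorial : ℝ) * (ε ^ 2)⁻¹ * (K / lam ε t) ^ n := by
  have hε := h.pos
  have ht0 := ht.1
  have hl := lam_pos hε ht0
  set B := K / lam ε t with hBdef
  have hB0 : 0 < B := by positivity
  have e1 : |iteratedDeriv n (fun s => Real.exp (φ s)) t| ≤ n.factorial * B ^ n := by
    refine (exp_comp_bound h.smooth ht n hB).trans ?_
    have : Real.exp (φ t) ≤ 1 := Real.exp_le_one_iff.2 (h.nonpos t ht)
    have hp : (0:ℝ) < n.factorial := by positivity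
    have := mul_le_mul_of_nonneg_left this hp.le
    rw [mul_one] at this
    gcongr
  have e2 : ∀ m ≤ n, |iteratedDeriv m (fun s => Real.exp (-φ s)) t| ≤
      n.factorial * (2 / √(ε ^ 2 + t)) * B ^ m := by
    intro m hm
    refine (exp_comp_bound (f := fun s => -φ s) h.smooth.neg ht m (B := B) ?_).trans ?_
    · intro j hj hjm
      have : iteratedDeriv j (fun s => -φ s) t = - iteratedDeriv j φ t := iteratedDeriv_neg j φ t
      rw [this, abs_neg]
      exact hB j hj (hjm.trans hm)
    · have h1 := h.exp_neg_le ht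
      have h2 : (m.factorial : ℝ) ≤ n.factorial := by exact_mod_cast Nat.factorial_le hm
      gcongr
  have hsq : √(ε ^ 2 + t) ^ 2 = ε ^ 2 + t := Real.sq_sqrt (by positivity)
  have hs0 : 0 < √(ε ^ 2 + t) := by positivity
  have hsle : √(ε ^ 2 + t) ≤ 2 := by
    rw [Real.sqrt_le_left (by norm_num)]
    have := h.lt1; have := ht.2; nlinarith
  have hεs : ε ≤ √(ε ^ 2 + t) := by
    apply Real.le_sqrt_of_sq_le; linarith
  have e3 : |iteratedDeriv n (fun s => s * Real.exp (-φ s)) t| ≤ 2 ^ n * (n.factorial * 4 * B ^ n) := by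
    have h1 := norm_iteratedFDerivWithin_mul_le (𝕜 := ℝ) (f := fun s : ℝ => s) (s := Ioo 0 1)
      (N := ((⊤ : ℕ∞) : WithTop ℕ∞)) contDiffOn_id h.smoothE isOpen_Ioo.uniqueDiffOn ht (n := n)
      (by exact_mod_cast le_top)
    rw [abs_itd ht] at h1
    refine h1.trans ?_
    have h2 : ∀ i ∈ Finset.range (n+1), (n.choose i : ℝ) *
        ‖iteratedFDerivWithin ℝ i (fun s : ℝ => s) (Ioo 0 1) t‖ *
        ‖iteratedFDerivWithin ℝ (n - i) (fun s => Real.exp (-φ s)) (Ioo 0 1) t‖ ≤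
        n.choose i * (n.factorial * 4 * B ^ n) := by
      intro i hi
      rw [abs_itd ht, abs_itd ht, mul_assoc]
      apply mul_le_mul_of_nonneg_left _ (by positivity)
      have hin : i ≤ n := by simpa [Nat.lt_succ_iff] using hi
      have h3 : |iteratedDeriv i (fun s : ℝ => s) t| ≤ √(ε ^ 2 + t) ^ 2 * B ^ i := by
        rw [iteratedDeriv_fun_id]
        split_ifs with h0 h1
        · subst h0
          rw [hsq, abs_of_pos ht0]
          have : 0 < ε ^ 2 := by positivity
          simp only [pow_zero, mul_one]
          linarith
        · subst h1
          rw [hBdef, pow_one, lam, abs_one]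
          have : √(ε ^ 2 + t) ^ 2 * (K / (ε * √(ε ^ 2 + t))) = K * (√(ε ^ 2 + t) / ε) := by
            field_simp
          rw [this]
          have : 1 ≤ √(ε ^ 2 + t) / ε := (one_le_div hε).2 hεs
          nlinarith
        · rw [abs_zero]; positivity
      have h4 := e2 (n - i) (Nat.sub_le _ _)
      calc _ ≤ (√(ε ^ 2 + t) ^ 2 * B ^ i) * (n.factorial * (2 / √(ε ^ 2 + t)) * B ^ (n - i)) := by
            gcongr
        _ = √(ε ^ 2 + t) * (n.factorial * 2 * (B ^ i * B ^ (n - i))) := by field_simp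
        _ = √(ε ^ 2 + t) * (n.factorial * 2 * B ^ n) := by
            rw [← pow_add, Nat.add_sub_cancel' hin]
        _ ≤ 2 * (n.factorial * 2 * B ^ n) := by gcongr
        _ = _ := by ring
    refine (Finset.sum_le_sum h2).trans ?_
    rw [← Finset.sum_mul]
    have : (∑ i ∈ Finset.range (n+1), (n.choose i : ℝ)) = 2 ^ n := by
      exact_mod_cast Nat.sum_range_choose n
    rw [this]
  have e4 : iteratedDeriv n (HH ε φ) t = (ε ^ 2)⁻¹ / 4 *
      (iteratedDeriv n (fun s => Real.exp (φ s)) t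
        - iteratedDeriv n (fun s => s * Real.exp (-φ s)) t) := by
    have hle : ((n : ℕ∞) : WithTop ℕ∞) ≤ ((⊤ : ℕ∞) : WithTop ℕ∞) := by exact_mod_cast le_top
    have ha : ContDiffAt ℝ n (fun s => Real.exp (φ s)) t :=
      ((h.smooth.exp).contDiffAt (isOpen_Ioo.mem_nhds ht)).of_le hle
    have hb : ContDiffAt ℝ n (fun s => s * Real.exp (-φ s)) t :=
      ((contDiffOn_id.mul h.smoothE).contDiffAt (isOpen_Ioo.mem_nhds ht)).of_le hle
    rw [← iteratedDeriv_sub ha hb]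
    exact iteratedDeriv_const_mul_field _ _
  rw [e4, abs_mul, abs_of_pos (by positivity)]
  have h5 : |iteratedDeriv n (fun s => Real.exp (φ s)) t
        - iteratedDeriv n (fun s => s * Real.exp (-φ s)) t| ≤
        n.factorial * B ^ n + 2 ^ n * (n.factorial * 4 * B ^ n) :=
    (abs_sub _ _).trans (add_le_add e1 e3)
  calc _ ≤ (ε ^ 2)⁻¹ / 4 * (n.factorial * B ^ n + 2 ^ n * (n.factorial * 4 * B ^ n)) := by gcongr
    _ ≤ (ε ^ 2)⁻¹ / 4 * (2 ^ n * (n.factorial * B ^ n) + 2 ^ n * (n.factorial * 4 * B ^ n)) := by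
        have : (1:ℝ) ≤ 2 ^ n := one_le_pow₀ (by norm_num)
        have h7 : (n.factorial * B ^ n : ℝ) ≤ 2 ^ n * (n.factorial * B ^ n) :=
          le_mul_of_one_le_left (by positivity) this
        apply mul_le_mul_of_nonneg_left _ (by positivity)
        linarith
    _ = (5/8) * ((2 ^ (n+1) * n.factorial : ℝ) * (ε ^ 2)⁻¹ * B ^ n) := by ring
    _ ≤ _ := by
        have : 0 ≤ (2 ^ (n+1) * n.factorial : ℝ) * (ε ^ 2)⁻¹ * B ^ n := by positivity
        linarith

lemma base (h : Prof ε φ) {t : ℝ} (ht : t ∈ Ioo (0:ℝ) 1) : |deriv φ t| ≤ 1 / lam ε t := by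
  have hε := h.pos
  have ht0 := ht.1
  have hl := lam_pos hε ht0
  rw [abs_of_nonneg (h.d_nonneg ht), le_div_iff₀ hl]
  rcases le_or_gt t (ε ^ 2) with hc | hc
  · have h1 := h.d_le ht
    have h2 := lam_le hε ht0 hc
    calc _ ≤ (ε ^ 2)⁻¹ / 4 * (2 * ε ^ 2) := by gcongr
      _ ≤ 1 := by field_simp; norm_num
  · have h1 := h.d_sq ht
    apply abs_le_of_sq_le_sq' _ (by norm_num) |>.2
    rw [mul_pow, lam_sq ht0]
    have h2 : (deriv φ t) ^ 2 * t ≤ (ε ^ 2)⁻¹ / 2 := by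
      have : ((deriv φ t) ^ 2 * t) * t ≤ (ε ^ 2)⁻¹ / 2 * t := by nlinarith
      exact le_of_mul_le_mul_right this ht0
    calc deriv φ t ^ 2 * (ε ^ 2 * (ε ^ 2 + t)) ≤ deriv φ t ^ 2 * (ε ^ 2 * (t + t)) := by gcongr
      _ = 2 * ε ^ 2 * (deriv φ t ^ 2 * t) := by ring
      _ ≤ 2 * ε ^ 2 * ((ε ^ 2)⁻¹ / 2) := by gcongr
      _ = 1 ^ 2 := by field_simp

end Prof

lemma prof_bounds (n : ℕ) : ∃ K : ℝ, 1 ≤ K ∧ ∀ ε φ, Prof ε φ → ∀ t ∈ Ioo (0:ℝ) 1,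
    ∀ j, 1 ≤ j → j ≤ n + 1 → |iteratedDeriv j φ t| ≤ (K / lam ε t) ^ j := by
  induction n with
  | zero =>
    refine ⟨1, le_rfl, ?_⟩
    intro ε φ h t ht j hj hj1
    have : j = 1 := by omega
    subst this
    simpa using h.base ht
  | succ n ih =>
    obtain ⟨K, hK, ih⟩ := ih
    set c0 : ℝ := 2 ^ (n+1) * n.factorial with hc0
    set c1 : ℝ := 2 ^ (n+1+1) * (n+1).factorial with hc1
    have hc0p : 0 < c0 := by positivity
    have hc1p : 0 < c1 := by positivity
    set M : ℝ := c1 * K ^ (n+1) * 2 ^ (n+2) + (2 * c0 * K ^ n + 2 * (n+1) * K ^ (n+1)) with hM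
    have hK0 : 0 < K := by linarith
    have hMp : 0 < M := by positivity
    refine ⟨K + M, by linarith, ?_⟩
    intro ε φ h t ht j hj hj1
    have hε := h.pos
    have ht0 := ht.1
    have hl := lam_pos hε ht0
    rcases Nat.lt_or_ge (n + 1) j with hjn | hjn
    swap
    · refine (ih ε φ h t ht j hj hjn).trans ?_
      gcongr
      linarith
    have hj2 : j = n + 2 := by omega
    subst hj2
    have key : |iteratedDeriv (n+2) φ t| ≤ M / lam ε t ^ (n+2) := by
      rcases le_or_gt t (ε ^ 2) with hc | hc
      · -- inner region
        have hε2 : ε ^ 2 < 1 := by have := h.lt1; nlinarith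
        set W : ℝ := c1 * (ε ^ 2)⁻¹ * (K / ε ^ 2) ^ (n+1) with hW
        have hHb : ∀ s ∈ Ioo (0:ℝ) 1, |iteratedDeriv (n+1) (HH ε φ) s| ≤ W := by
          intro s hs
          refine (h.H_bound (n+1) hs hK (ih ε φ h s hs)).trans ?_
          have := le_lam hε hs.1
          have := lam_pos hε hs.1
          rw [hW]
          gcongr
        have hd : ∀ s ∈ Ioo (0:ℝ) 1, HasDerivAt (fun s => s ^ (n+2) * iteratedDeriv (n+2) φ s)
            (s ^ (n+1) * iteratedDeriv (n+1) (HH ε φ) s) s := by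
          intro s hs
          have h1 : HasDerivAt (fun s => s ^ (n+2) * iteratedDeriv (n+2) φ s) _ s :=
            (hasDerivAt_pow (n+2) s).mul (h.hda hs (n+2))
          convert h1 using 1
          rw [← h.recur (n+1) s hs]
          push_cast
          ring
        have hlim : Tendsto (fun s => s ^ (n+2) * iteratedDeriv (n+2) φ s) (𝓝[>] 0) (𝓝 0) := by
          set V : ℝ := c0 * (ε ^ 2)⁻¹ * (K / ε ^ 2) ^ n + (n+1) * (K / ε ^ 2) ^ (n+1) with hV
          have hb : ∀ s ∈ Ioo (0:ℝ) 1, |s * iteratedDeriv (n+2) φ s| ≤ V := by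
            intro s hs
            have h1 := h.recur n s hs
            have h2 := h.H_bound n hs hK (fun j hj hjn => ih ε φ h s hs j hj (by omega))
            have h3 := ih ε φ h s hs (n+1) (by omega) le_rfl
            have h4 := le_lam hε hs.1
            have h5 := lam_pos hε hs.1
            have h6 : s * iteratedDeriv (n+2) φ s =
              iteratedDeriv n (HH ε φ) s - (n+1) * iteratedDeriv (n+1) φ s := by linarith
            rw [h6]
            refine (abs_sub _ _).trans ?_
            rw [abs_mul, abs_of_pos (show (0:ℝ) < n + 1 by positivity)]
            have h7 : K / lam ε s ≤ K / ε ^ 2 := by gcongr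
            have h8 : 0 < K / lam ε s := by positivity
            apply add_le_add
            · refine h2.trans ?_
              gcongr
            · apply mul_le_mul_of_nonneg_left _ (by positivity)
              refine h3.trans ?_
              gcongr
          have hz : Tendsto (fun s : ℝ => s ^ (n+1) * V) (𝓝[>] 0) (𝓝 0) := by
            have : Continuous (fun s : ℝ => s ^ (n+1) * V) := by fun_prop
            simpa using (this.tendsto 0).mono_left nhdsWithin_le_nhds
          apply squeeze_zero_norm' _ hz
          filter_upwards [Ioo_mem_nhdsGT (zero_lt_one' ℝ)] with s hs
          have e : s ^ (n+2) * iteratedDeriv (n+2) φ s = s ^ (n+1) * (s * iteratedDeriv (n+2) φ s) := by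
            ring
          have hs0 : 0 < s ^ (n+1) := pow_pos hs.1 _
          rw [e, Real.norm_eq_abs, abs_mul, abs_of_pos hs0]
          exact mul_le_mul_of_nonneg_left (hb s hs) hs0.le
        have hWp : 0 < W := by positivity
        have hdW : ∀ s : ℝ, HasDerivAt (fun s => W * s ^ (n+2)) (W * ((n+2:ℕ) * s ^ (n+1))) s :=
          fun s => (hasDerivAt_pow (n+2) s).const_mul W
        have hWl : Tendsto (fun s : ℝ => W * s ^ (n+2)) (𝓝[>] 0) (𝓝 0) := by
          have : Continuous (fun s : ℝ => W * s ^ (n+2)) := by fun_prop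
          simpa using (this.tendsto 0).mono_left nhdsWithin_le_nhds
        have hineq : ∀ s ∈ Ioo (0:ℝ) 1, |s ^ (n+1) * iteratedDeriv (n+1) (HH ε φ) s| ≤
            W * ((n+2:ℕ) * s ^ (n+1)) := by
          intro s hs
          have hs0 : 0 < s ^ (n+1) := pow_pos hs.1 _
          rw [abs_mul, abs_of_pos hs0]
          have h1 := mul_le_mul_of_nonneg_left (hHb s hs) hs0.le
          have h2 : (1:ℝ) ≤ (n+2:ℕ) := by push_cast; linarith [Nat.cast_nonneg (α := ℝ) n]
          have h3 : 0 < W * s ^ (n+1) := by positivity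
          nlinarith
        have hup := mono_lim (fun s hs => (hdW s).sub (hd s hs)) (fun s hs => by
          have := (abs_le.1 (hineq s hs)).2; linarith) (by have h0 := hWl.sub hlim; rw [sub_zero] at h0; exact h0) t ht
        have hlo := mono_lim (fun s hs => (hdW s).add (hd s hs)) (fun s hs => by
          have := (abs_le.1 (hineq s hs)).1; linarith) (by have h0 := hWl.add hlim; rw [add_zero] at h0; exact h0) t ht
        simp only [Pi.sub_apply, Pi.add_apply] at hup hlo
        have htp : 0 < t ^ (n+2) := pow_pos ht0 _
        have h9 : |iteratedDeriv (n+2) φ t| ≤ W := by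
          have : t ^ (n+2) * |iteratedDeriv (n+2) φ t| ≤ t ^ (n+2) * W := by
            rw [← abs_of_pos htp, ← abs_mul, abs_of_pos htp, abs_le]
            constructor <;> linarith
          exact le_of_mul_le_mul_left this htp
        refine h9.trans ?_
        rw [le_div_iff₀ (by positivity)]
        have h10 := lam_le hε ht0 hc
        calc W * lam ε t ^ (n+2) ≤ W * (2 * ε ^ 2) ^ (n+2) := by gcongr
          _ = c1 * K ^ (n+1) * 2 ^ (n+2) := by
            rw [hW, div_pow, mul_pow]
            field_simp
            ring
          _ ≤ M := by
            have : 0 < 2 * c0 * K ^ n + 2 * (n+1) * K ^ (n+1) := by positivity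
            linarith
      · -- outer region
        have h1 := h.recur n t ht
        have h2 := h.H_bound n ht hK (fun j hj hjn => ih ε φ h t ht j hj (by omega))
        have h3 := ih ε φ h t ht (n+1) (by omega) le_rfl
        have h4 := le_lam hε ht0
        have h6 : t * iteratedDeriv (n+2) φ t =
          iteratedDeriv n (HH ε φ) t - (n+1) * iteratedDeriv (n+1) φ t := by linarith
        have h7 : t * |iteratedDeriv (n+2) φ t| ≤
            c0 * (ε ^ 2)⁻¹ * (K / lam ε t) ^ n + (n+1) * (K / lam ε t) ^ (n+1) := by
          rw [← abs_of_pos ht0, ← abs_mul, abs_of_pos ht0, h6]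
          refine (abs_sub _ _).trans ?_
          rw [abs_mul, abs_of_pos (show (0:ℝ) < n + 1 by positivity)]
          apply add_le_add h2
          exact mul_le_mul_of_nonneg_left h3 (by positivity)
        rw [le_div_iff₀ (by positivity)]
        set l := lam ε t with hldef
        have hl2 : l ^ 2 ≤ 2 * ε ^ 2 * t := by
          rw [hldef, lam_sq ht0]
          have : 0 < ε ^ 2 := by positivity
          nlinarith
        calc |iteratedDeriv (n+2) φ t| * l ^ (n+2) = |iteratedDeriv (n+2) φ t| * l ^ 2 * l ^ n := by ring
          _ ≤ |iteratedDeriv (n+2) φ t| * (2 * ε ^ 2 * t) * l ^ n := by gcongr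
          _ = 2 * ε ^ 2 * l ^ n * (t * |iteratedDeriv (n+2) φ t|) := by ring
          _ ≤ 2 * ε ^ 2 * l ^ n * (c0 * (ε ^ 2)⁻¹ * (K / l) ^ n + (n+1) * (K / l) ^ (n+1)) := by gcongr
          _ = 2 * c0 * K ^ n + 2 * (n+1) * K ^ (n+1) * (ε ^ 2 / l) := by
            rw [div_pow, div_pow]
            field_simp
            ring
          _ ≤ 2 * c0 * K ^ n + 2 * (n+1) * K ^ (n+1) * 1 := by
            gcongr
            exact (div_le_one hl).2 h4
          _ ≤ M := by
            have : 0 < c1 * K ^ (n+1) * 2 ^ (n+2) := by positivity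
            linarith
    refine key.trans ?_
    rw [div_pow]
    gcongr
    calc M ≤ K + M := by linarith
      _ ≤ (K + M) ^ (n+2) := le_self_pow₀ (by linarith) (by omega)

abbrev E2 := EuclideanSpace ℝ (Fin 2)

lemma two_le_inf : (2 : WithTop ℕ∞) ≤ ((⊤ : ℕ∞) : WithTop ℕ∞) :=
  WithTop.coe_le_coe.2 (le_top : (2 : ℕ∞) ≤ ⊤)

lemma liq_fderiv (Q : E2 ≃ₗᵢ[ℝ] E2) (f : E2 → ℝ) (y v : E2) :
    fderiv ℝ (f ∘ Q) y v = fderiv ℝ f (Q y) (Q v) := by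
  have h : fderiv ℝ (f ∘ Q.toContinuousLinearEquiv) y = _ :=
    Q.toContinuousLinearEquiv.comp_right_fderiv
  exact congrArg (fun L => L v) h

lemma lap_eq {f : E2 → ℝ} {x : E2} (hf : ContDiffAt ℝ 2 f x) :
    laplacian2 f x = ∑ i : Fin 2, fderiv ℝ (fderiv ℝ f) x (EuclideanSpace.single i 1)
      (EuclideanSpace.single i 1) := by
  unfold laplacian2
  have hd : DifferentiableAt ℝ (fderiv ℝ f) x :=
    (hf.fderiv_right (m := 1) (by norm_num)).differentiableAt (by norm_num)
  refine Finset.sum_congr rfl fun i _ => ?_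
  rw [fderiv_clm_apply hd (differentiableAt_const _)]
  simp

lemma lap_trace {f : E2 → ℝ} {x : E2} (hf : ContDiffAt ℝ 2 f x) (b : OrthonormalBasis (Fin 2) ℝ E2) :
    laplacian2 f x = ∑ i : Fin 2, fderiv ℝ (fderiv ℝ f) x (b i) (b i) := by
  rw [lap_eq hf]
  have h1 := congrFun (InnerProductSpace.laplacian_eq_iteratedFDeriv_orthonormalBasis f b) x
  have h2 := congrFun (InnerProductSpace.laplacian_eq_iteratedFDeriv_orthonormalBasis f
    (EuclideanSpace.basisFun (Fin 2) ℝ)) x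
  rw [h1] at h2
  simpa [iteratedFDeriv_two_apply] using h2.symm

lemma lap_sub {f g : E2 → ℝ} {x : E2} (hf : ContDiffAt ℝ 2 f x) (hg : ContDiffAt ℝ 2 g x) :
    laplacian2 (fun y => f y - g y) x = laplacian2 f x - laplacian2 g x := by
  rw [lap_eq (hf.sub hg), lap_eq hf, lap_eq hg]
  have hd : DifferentiableAt ℝ (fderiv ℝ f) x :=
    (hf.fderiv_right (m := 1) (by norm_num)).differentiableAt (by norm_num)
  have hd' : DifferentiableAt ℝ (fderiv ℝ g) x :=
    (hg.fderiv_right (m := 1) (by norm_num)).differentiableAt (by norm_num)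
  have he : fderiv ℝ (fun y => f y - g y) =ᶠ[𝓝 x] fun y => fderiv ℝ f y - fderiv ℝ g y := by
    filter_upwards [hf.eventually (by simp), hg.eventually (by simp)] with y h1 h2
    exact fderiv_fun_sub (h1.differentiableAt (by norm_num)) (h2.differentiableAt (by norm_num))
  rw [he.fderiv_eq, fderiv_fun_sub hd hd', ← Finset.sum_sub_distrib]
  simp

lemma lap_comp {f : E2 → ℝ} (Q : E2 ≃ₗᵢ[ℝ] E2) {x : E2} (hf : ContDiffAt ℝ 2 f (Q x)) :
    laplacian2 (f ∘ Q) x = laplacian2 f (Q x) := by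
  rw [lap_trace hf ((EuclideanSpace.basisFun (Fin 2) ℝ).map Q)]
  unfold laplacian2
  have hd : DifferentiableAt ℝ (fderiv ℝ f) (Q x) :=
    (hf.fderiv_right (m := 1) (by norm_num)).differentiableAt (by norm_num)
  refine Finset.sum_congr rfl fun i _ => ?_
  have h1 : (fun y => fderiv ℝ (f ∘ Q) y (EuclideanSpace.single i 1)) =
      (fun z => fderiv ℝ f z (Q (EuclideanSpace.single i 1))) ∘ Q := by
    funext y
    exact liq_fderiv Q f y _
  rw [h1, liq_fderiv]
  have h2 := fderiv_clm_apply hd (differentiableAt_const (Q (EuclideanSpace.single i 1)))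
  rw [h2]
  simp

lemma second_dir {f : E2 → ℝ} {x : E2} (hf : ContDiffAt ℝ 2 f x) (e : E2) :
    deriv (deriv (fun s : ℝ => f (x + s • e))) 0 = fderiv ℝ (fderiv ℝ f) x e e := by
  have hd : DifferentiableAt ℝ (fderiv ℝ f) x :=
    (hf.fderiv_right (m := 1) (by norm_num)).differentiableAt (by norm_num)
  have hl : ∀ s : ℝ, HasDerivAt (fun s : ℝ => x + s • e) e s := fun s => by
    simpa using ((hasDerivAt_id' s).smul_const e).const_add x
  have hc : Tendsto (fun s : ℝ => x + s • e) (𝓝 0) (𝓝 x) := by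
    have : Continuous (fun s : ℝ => x + s • e) := by fun_prop
    simpa using this.tendsto 0
  have he : deriv (fun s : ℝ => f (x + s • e)) =ᶠ[𝓝 0] fun s => fderiv ℝ f (x + s • e) e := by
    filter_upwards [hc.eventually (hf.eventually (by simp))] with s hs
    exact ((hs.differentiableAt (by norm_num)).hasFDerivAt.comp_hasDerivAt s (hl s)).deriv
  rw [he.deriv_eq]
  have hd0 : HasFDerivAt (fderiv ℝ f) (fderiv ℝ (fderiv ℝ f) x) (x + (0:ℝ) • e) := by
    simpa using hd.hasFDerivAt
  have h3 := hd0.comp_hasDerivAt (0:ℝ) (hl 0)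
  exact ((ContinuousLinearMap.apply ℝ ℝ e).hasFDerivAt.comp_hasDerivAt (0:ℝ) h3).deriv

lemma maxp {w : E2 → ℝ} (hc : ContinuousOn w (closedBall 0 1))
    (hs : ContDiffOn ℝ (⊤ : ℕ∞) w (ball 0 1))
    (hb : ∀ x ∈ sphere (0 : E2) 1, w x ≤ 0)
    (hL : ∀ x ∈ ball (0 : E2) 1, 0 < w x → 0 < laplacian2 w x) :
    ∀ x ∈ closedBall (0 : E2) 1, w x ≤ 0 := by
  obtain ⟨m, hm, hmax⟩ := (isCompact_closedBall (0 : E2) 1).exists_isMaxOn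
    ⟨0, by simp⟩ hc
  by_contra hcon
  push Not at hcon
  obtain ⟨x, hx, hwx⟩ := hcon
  have hwm : 0 < w m := lt_of_lt_of_le hwx (hmax hx)
  have hmb : m ∈ ball (0 : E2) 1 := by
    rcases (mem_closedBall.1 hm).lt_or_eq with h | h
    · exact h
    · exact absurd (hb m h) (not_le.2 hwm)
  have hcd : ContDiffAt ℝ 2 w m := (hs.contDiffAt (isOpen_ball.mem_nhds hmb)).of_le two_le_inf
  have hlm : IsLocalMax w m := hmax.isLocalMax (mem_of_superset (isOpen_ball.mem_nhds hmb) ball_subset_closedBall)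
  have hpos := hL m hmb hwm
  rw [lap_eq hcd] at hpos
  have : ∑ i : Fin 2, fderiv ℝ (fderiv ℝ w) m (EuclideanSpace.single i 1)
      (EuclideanSpace.single i 1) ≤ 0 := by
    apply Finset.sum_nonpos
    intro i _
    rw [← second_dir hcd]
    have hcl : Continuous (fun s : ℝ => m + s • (EuclideanSpace.single i 1 : E2)) := by fun_prop
    have hcl0 : Tendsto (fun s : ℝ => m + s • (EuclideanSpace.single i 1 : E2)) (𝓝 0) (𝓝 m) := by
      simpa using hcl.tendsto 0
    apply second_deriv_nonpos_of_localMax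
    · have h5 := hcl0.eventually hlm
      simpa [IsLocalMax, IsMaxFilter] using h5
    · apply ContinuousAt.comp' (f := fun s : ℝ => m + s • (EuclideanSpace.single i 1 : E2))
      · simpa using hcd.continuousAt
      · exact hcl.continuousAt
  linarith

lemma sol_le {ε : ℝ} (hε : 0 < ε) {u v : E2 → ℝ} (hu : IsDirichletSol ε u)
    (hv : IsDirichletSol ε v) : ∀ x ∈ closedBall (0 : E2) 1, u x ≤ v x := by
  obtain ⟨h1, h2, h3, h4⟩ := hu
  obtain ⟨k1, k2, k3, k4⟩ := hv
  have := maxp (w := fun y => u y - v y) (h1.sub k1) (h2.sub k2)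
    (fun x hx => by simp [h4 x hx, k4 x hx]) (fun x hx hpos => by
      have c1 : ContDiffAt ℝ 2 u x := (h2.contDiffAt (isOpen_ball.mem_nhds hx)).of_le two_le_inf
      have c2 : ContDiffAt ℝ 2 v x := (k2.contDiffAt (isOpen_ball.mem_nhds hx)).of_le two_le_inf
      rw [lap_sub c1 c2, h3 x hx, k3 x hx, ← mul_sub]
      have e1 : Real.exp (v x) < Real.exp (u x) := Real.exp_lt_exp.2 (by linarith)
      have e2 : Real.exp (-u x) ≤ Real.exp (-v x) := Real.exp_le_exp.2 (by linarith)
      have e3 := mul_le_mul_of_nonneg_left e2 (sq_nonneg ‖x‖)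
      apply mul_pos (by positivity)
      linarith)
  intro x hx
  have := this x hx
  linarith

lemma sol_nonpos {ε : ℝ} (hε : 0 < ε) {u : E2 → ℝ} (hu : IsDirichletSol ε u) :
    ∀ x ∈ closedBall (0 : E2) 1, u x ≤ 0 := by
  obtain ⟨h1, h2, h3, h4⟩ := hu
  refine maxp h1 h2 (fun x hx => (h4 x hx).le) (fun x hx hpos => ?_)
  rw [h3 x hx]
  have e1 : 1 < Real.exp (u x) := Real.one_lt_exp_iff.2 hpos
  have e2 : Real.exp (-u x) ≤ 1 := Real.exp_le_one_iff.2 (by linarith)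
  have e3 : ‖x‖ < 1 := by simpa using hx
  have e4 : ‖x‖ ^ 2 ≤ 1 := by nlinarith [norm_nonneg x]
  apply mul_pos (by positivity)
  nlinarith [Real.exp_pos (-u x), sq_nonneg ‖x‖]

lemma sol_comp {ε : ℝ} {u : E2 → ℝ} (hu : IsDirichletSol ε u) (Q : E2 ≃ₗᵢ[ℝ] E2) :
    IsDirichletSol ε (u ∘ Q) := by
  obtain ⟨h1, h2, h3, h4⟩ := hu
  refine ⟨h1.comp Q.continuous.continuousOn ?_, h2.comp Q.contDiff.contDiffOn ?_, ?_, ?_⟩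
  · intro x hx; simpa using hx
  · intro x hx; simpa using hx
  · intro x hx
    have hQ : Q x ∈ ball (0 : E2) 1 := by simpa using hx
    rw [lap_comp Q ((h2.contDiffAt (isOpen_ball.mem_nhds hQ)).of_le two_le_inf), h3 _ hQ]
    simp
  · intro x hx
    exact h4 _ (by simpa using hx)

lemma sol_radial {ε : ℝ} (hε : 0 < ε) {u : E2 → ℝ} (hu : IsDirichletSol ε u) {x y : E2}
    (hx : x ∈ closedBall (0 : E2) 1) (hxy : ‖x‖ = ‖y‖) : u x = u y := by
  set Q := (ℝ ∙ (x - y))ᗮ.reflection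
  have hQ : Q x = y := Submodule.reflection_sub hxy
  have h1 := sol_le hε hu (sol_comp hu Q) x hx
  have h2 := sol_le hε (sol_comp hu Q) hu x hx
  simp only [Function.comp_apply, hQ] at h1 h2
  exact le_antisymm h1 h2

lemma rad_fderiv {φ : ℝ → ℝ} {y v : E2} (h : DifferentiableAt ℝ φ (‖y‖ ^ 2)) :
    HasFDerivAt (fun z : E2 => φ (‖z‖ ^ 2)) (deriv φ (‖y‖ ^ 2) • ((2 : ℝ) • innerSL ℝ y)) y := by
  have h1 : HasFDerivAt (fun z : E2 => ‖z‖ ^ 2) ((2 : ℝ) • innerSL ℝ y) y := by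
    have := (hasStrictFDerivAt_norm_sq y).hasFDerivAt
    have h2 : ((2 : ℝ) • innerSL ℝ y : E2 →L[ℝ] ℝ) = (2 : ℕ) • innerSL ℝ y := by
      rw [two_smul, two_smul]
    rw [h2]
    exact this
  exact h.hasDerivAt.comp_hasFDerivAt y h1

lemma rad_lap {u : E2 → ℝ} {φ : ℝ → ℝ} {x : E2} (hx : x ≠ 0)
    (hφ : ContDiffAt ℝ 2 φ (‖x‖ ^ 2)) (he : u =ᶠ[𝓝 x] fun z => φ (‖z‖ ^ 2)) :
    laplacian2 u x = 4 * (‖x‖ ^ 2 * deriv (deriv φ) (‖x‖ ^ 2) + deriv φ (‖x‖ ^ 2)) := by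
  unfold laplacian2
  have hn : Tendsto (fun z : E2 => ‖z‖ ^ 2) (𝓝 x) (𝓝 (‖x‖ ^ 2)) :=
    (continuous_norm.pow 2).tendsto x
  have hd : DifferentiableAt ℝ (deriv φ) (‖x‖ ^ 2) := by
    have h1 : ContDiffAt ℝ 1 (deriv φ) (‖x‖ ^ 2) := by
      have h0 := hφ.fderiv_right (m := 1) (by norm_num)
      have : deriv φ = fun y => fderiv ℝ φ y 1 := by funext y; simp
      rw [this]
      exact h0.clm_apply contDiffAt_const
    exact h1.differentiableAt (by norm_num)
  have key : ∀ v : E2, fderiv ℝ (fun y => fderiv ℝ u y v) x v =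
      deriv φ (‖x‖ ^ 2) * (2 * inner ℝ v v) +
        (2 * inner ℝ x v) * (deriv (deriv φ) (‖x‖ ^ 2) * (2 * inner ℝ x v)) := by
    intro v
    have h1 : (fun y => fderiv ℝ u y v) =ᶠ[𝓝 x]
        fun y => deriv φ (‖y‖ ^ 2) * (2 * inner ℝ y v) := by
      filter_upwards [he.eventually_nhds, hn.eventually (hφ.eventually (by simp))] with y h2 h3
      rw [Filter.EventuallyEq.fderiv_eq h2,
        (rad_fderiv (v := v) (h3.differentiableAt (by norm_num))).fderiv]
      simp
    rw [h1.fderiv_eq]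
    have h4 := rad_fderiv (v := v) (y := x) (φ := deriv φ) hd
    have h5 : HasFDerivAt (fun y : E2 => 2 * inner ℝ y v) ((2 : ℝ) • innerSL ℝ v) x := by
      have : (fun y : E2 => 2 * inner ℝ y v) = fun y => ((2 : ℝ) • innerSL ℝ v) y := by
        funext y; simp [real_inner_comm]
      rw [this]
      exact ContinuousLinearMap.hasFDerivAt _
    rw [(h4.fun_mul h5).fderiv]
    simp
  simp only [key]
  have hx2 : ‖x‖ ^ 2 = x 0 ^ 2 + x 1 ^ 2 := by
    rw [EuclideanSpace.norm_sq_eq]; simp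
  rw [Fin.sum_univ_two]
  simp only [EuclideanSpace.inner_single_right]
  simp
  generalize deriv (deriv φ) (‖x‖ ^ 2) = a
  generalize deriv φ (‖x‖ ^ 2) = b
  rw [hx2]
  ring

noncomputable def prf (u : E2 → ℝ) (t : ℝ) : ℝ := u (√t • EuclideanSpace.single 0 1)

lemma norm_e0 : ‖(EuclideanSpace.single 0 1 : E2)‖ = 1 := by simp

lemma norm_se (t : ℝ) : ‖√t • (EuclideanSpace.single 0 1 : E2)‖ = √t := by
  rw [norm_smul, norm_e0, Real.norm_eq_abs, abs_of_nonneg (Real.sqrt_nonneg t), mul_one]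

lemma u_eq_prf {ε : ℝ} (hε : 0 < ε) {u : E2 → ℝ} (hu : IsDirichletSol ε u) {x : E2}
    (hx : x ∈ closedBall (0 : E2) 1) : u x = prf u (‖x‖ ^ 2) := by
  apply sol_radial hε hu hx
  rw [norm_se, Real.sqrt_sq (norm_nonneg x)]

lemma se_mem {t : ℝ} (ht : t ∈ Ioo (0:ℝ) 1) :
    √t • (EuclideanSpace.single 0 1 : E2) ∈ ball (0 : E2) 1 := by
  rw [mem_ball_zero_iff, norm_se, Real.sqrt_lt' one_pos]
  simpa using ht.2

lemma prf_prof {ε : ℝ} (hε : 0 < ε) (hε1 : ε < 1) {u : E2 → ℝ} (hu : IsDirichletSol ε u) :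
    Prof ε (prf u) := by
  obtain ⟨h1, h2, h3, h4⟩ := id hu
  have hsm : ContDiffOn ℝ (⊤ : ℕ∞) (prf u) (Ioo 0 1) := by
    refine h2.comp (f := fun t : ℝ => √t • (EuclideanSpace.single 0 1 : E2)) ?_
      (fun t ht => se_mem ht)
    intro t ht
    exact ((Real.contDiffAt_sqrt ht.1.ne').smul contDiffAt_const).contDiffWithinAt
  refine ⟨hε, hε1, hsm, ?_, ?_, ?_, ?_, ?_⟩
  · refine h1.comp (f := fun t : ℝ => √t • (EuclideanSpace.single 0 1 : E2)) ?_ ?_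
    · exact (Real.continuous_sqrt.smul continuous_const).continuousOn
    · intro t ht
      rw [mem_closedBall_zero_iff, norm_se]
      exact Real.sqrt_le_one.2 ht.2
  · intro t ht
    exact sol_nonpos hε hu _ (ball_subset_closedBall (se_mem ht))
  · apply h4
    rw [mem_sphere_zero_iff_norm, norm_se, Real.sqrt_one]
  · intro t ht
    set x : E2 := √t • (EuclideanSpace.single 0 1 : E2) with hxd
    have hxn : ‖x‖ ^ 2 = t := by rw [hxd, norm_se, Real.sq_sqrt ht.1.le]
    have hxb : x ∈ ball (0 : E2) 1 := se_mem ht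
    have hx0 : x ≠ 0 := by
      intro h; rw [h] at hxn; simp at hxn; exact ht.1.ne hxn
    have he : u =ᶠ[𝓝 x] fun z => prf u (‖z‖ ^ 2) := by
      filter_upwards [isOpen_ball.mem_nhds hxb] with y hy
      exact u_eq_prf hε hu (ball_subset_closedBall hy)
    have hc : ContDiffAt ℝ 2 (prf u) (‖x‖ ^ 2) := by
      rw [hxn]
      exact (hsm.contDiffAt (isOpen_Ioo.mem_nhds ht)).of_le two_le_inf
    have hl := rad_lap hx0 hc he
    rw [h3 x hxb, hxn] at hl
    have : HH ε (prf u) t = (ε^2)⁻¹ / 4 * (Real.exp (u x) - t * Real.exp (-u x)) := rfl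
    rw [this]
    linarith
  · have hcont : ContinuousAt (fderiv ℝ u) 0 :=
      (((h2.contDiffAt (isOpen_ball.mem_nhds (by simp))).of_le two_le_inf).fderiv_right
        (m := 1) (by norm_num)).continuousAt
    have ht0 : Tendsto (fun t : ℝ => √t) (𝓝[>] 0) (𝓝 0) := by
      have := Real.continuous_sqrt.tendsto 0
      rw [Real.sqrt_zero] at this
      exact this.mono_left nhdsWithin_le_nhds
    have ht1 : Tendsto (fun t : ℝ => √t • (EuclideanSpace.single 0 1 : E2)) (𝓝[>] 0) (𝓝 0) := by
      simpa using ht0.smul_const (EuclideanSpace.single 0 1 : E2)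
    have ht2 : Tendsto (fun t : ℝ => fderiv ℝ u (√t • (EuclideanSpace.single 0 1 : E2))
        (EuclideanSpace.single 0 1)) (𝓝[>] 0) (𝓝 (fderiv ℝ u 0 (EuclideanSpace.single 0 1))) :=
      (((ContinuousLinearMap.apply ℝ ℝ (EuclideanSpace.single 0 1 : E2)).continuous.tendsto
        _).comp (hcont.tendsto.comp ht1))
    have ht3 := (ht0.mul ht2).div_const 2
    simp only [zero_mul, zero_div] at ht3
    refine ht3.congr' ?_
    filter_upwards [Ioo_mem_nhdsGT (show (0:ℝ) < 1 by norm_num)] with t ht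
    have hd : DifferentiableAt ℝ u (√t • (EuclideanSpace.single 0 1 : E2)) :=
      ((h2.contDiffAt (isOpen_ball.mem_nhds (se_mem ht))).of_le two_le_inf).differentiableAt
        (by norm_num)
    have hs := (Real.hasDerivAt_sqrt ht.1.ne').smul_const (EuclideanSpace.single 0 1 : E2)
    have hc : HasDerivAt (prf u) _ t := hd.hasFDerivAt.comp_hasDerivAt t hs
    rw [hc.deriv, map_smul, smul_eq_mul]
    have hst : 0 < √t := Real.sqrt_pos.2 ht.1
    have hsq := Real.sq_sqrt ht.1.le
    generalize fderiv ℝ u (√t • (EuclideanSpace.single 0 1 : E2)) (EuclideanSpace.single 0 1) = A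
    field_simp
    rw [hsq]
    ring

lemma itd_scale (φ : ℝ → ℝ) (c : ℝ) (n : ℕ) :
    iteratedDeriv n (fun τ => φ (c * τ)) = fun τ => c ^ n * iteratedDeriv n φ (c * τ) := by
  induction n with
  | zero => funext τ; simp
  | succ n ih =>
    rw [iteratedDeriv_succ, ih]
    funext τ
    rw [deriv_const_mul_field, deriv_comp_mul_left, smul_eq_mul, ← iteratedDeriv_succ, pow_succ]
    ring

lemma nsq_contDiff (l : ℝ) : ContDiff ℝ (⊤ : ℕ∞) (fun y : E2 => l * ‖y‖ ^ 2) :=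
  contDiff_const.mul (contDiff_norm_sq ℝ)

lemma nsq_fderiv (l : ℝ) : fderiv ℝ (fun y : E2 => l * ‖y‖ ^ 2) =
    fun y => ((2 * l) • (innerSL ℝ : E2 →L[ℝ] E2 →L[ℝ] ℝ)) y := by
  funext y
  have h1 := (hasStrictFDerivAt_norm_sq y).hasFDerivAt.const_mul l
  rw [h1.fderiv]
  ext w
  simp
  ring

lemma innerSL_norm_le : ‖(innerSL ℝ : E2 →L[ℝ] E2 →L[ℝ] ℝ)‖ ≤ 1 :=
  ContinuousLinearMap.opNorm_le_bound _ zero_le_one fun x => by simp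

lemma nsq_bound {l b : ℝ} (hl : 0 < l) (hb : 0 ≤ b) {x : E2} (h1 : 2 * l * ‖x‖ ≤ b)
    (h2 : 2 * l ≤ b ^ 2) (i : ℕ) (hi : 1 ≤ i) :
    ‖iteratedFDeriv ℝ i (fun y : E2 => l * ‖y‖ ^ 2) x‖ ≤ b ^ i := by
  obtain ⟨i, rfl⟩ : ∃ j, i = j + 1 := ⟨i - 1, by omega⟩
  rw [← norm_iteratedFDeriv_fderiv, nsq_fderiv]
  rcases i with _ | i
  · rw [norm_iteratedFDeriv_zero]
    simp only [ContinuousLinearMap.smul_apply, norm_smul, innerSL_apply_norm, zero_add, pow_one]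
    rw [Real.norm_of_nonneg (by positivity)]
    exact h1
  · rw [← norm_iteratedFDeriv_fderiv]
    have : fderiv ℝ (fun y => ((2 * l) • (innerSL ℝ : E2 →L[ℝ] E2 →L[ℝ] ℝ)) y) =
        fun _ => ((2 * l) • (innerSL ℝ : E2 →L[ℝ] E2 →L[ℝ] ℝ)) := by
      funext y
      exact ContinuousLinearMap.fderiv _
    rw [this]
    rcases i with _ | i
    · rw [norm_iteratedFDeriv_zero, norm_smul, Real.norm_of_nonneg (by positivity)]
      have := innerSL_norm_le
      calc 2 * l * _ ≤ 2 * l * 1 := by gcongr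
        _ ≤ _ := by simpa using h2
    · rw [iteratedFDeriv_const_of_ne (by omega)]
      simp
      positivity

lemma u_bound (k : ℕ) : ∃ C : ℝ, 0 ≤ C ∧ ∀ ε : ℝ, 0 < ε → ε < 1 → ∀ u : E2 → ℝ,
    IsDirichletSol ε u → ∀ i ≤ k, ∀ x ∈ ball (0 : E2) 1, x ≠ 0 →
      ‖iteratedFDeriv ℝ i u x‖ ≤ C * (ε ^ (k + 2))⁻¹ := by
  obtain ⟨K, hK, hb⟩ := prof_bounds k
  refine ⟨k.factorial * K ^ k * 2 ^ k, by positivity, ?_⟩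
  intro ε hε hε1 u hu i hik x hx hx0
  have hP := prf_prof hε hε1 hu
  have hxn : 0 < ‖x‖ := norm_pos_iff.2 hx0
  have hx1 : ‖x‖ < 1 := by simpa using hx
  have ht : ‖x‖ ^ 2 ∈ Ioo (0:ℝ) 1 := ⟨by positivity, by nlinarith⟩
  set L := lam ε (‖x‖ ^ 2) with hL
  have hLp : 0 < L := lam_pos hε ht.1
  have hL2 : ε ^ 2 ≤ L := le_lam hε ht.1
  have hL1 : ε * ‖x‖ ≤ L := by
    apply le_of_sq_le_sq _ hLp.le
    rw [hL, lam_sq ht.1]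
    have : 0 < ε ^ 2 := by positivity
    nlinarith
  set f : E2 → ℝ := fun y => L⁻¹ * ‖y‖ ^ 2 with hf
  set g : ℝ → ℝ := fun τ => prf u (L * τ) with hg
  have hLf : ∀ y, L * f y = ‖y‖ ^ 2 := fun y => by rw [hf]; field_simp
  have hug : u =ᶠ[𝓝 x] g ∘ f := by
    filter_upwards [isOpen_ball.mem_nhds hx] with y hy
    rw [Function.comp_apply, hg]
    simp only
    rw [hLf]
    exact u_eq_prf hε hu (ball_subset_closedBall hy)
  rw [(hug.iteratedFDeriv ℝ i).eq_of_nhds]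
  set T : Set ℝ := (fun τ => L * τ) ⁻¹' Ioo 0 1 with hT
  have hTo : IsOpen T := isOpen_Ioo.preimage (continuous_const.mul continuous_id)
  set S : Set E2 := f ⁻¹' T with hS
  have hfc : ContDiff ℝ (⊤ : ℕ∞) f := nsq_contDiff _
  have hSo : IsOpen S := hTo.preimage hfc.continuous
  have hfT : f x ∈ T := by
    change L * f x ∈ Ioo (0:ℝ) 1
    rw [hLf]; exact ht
  have hxS : x ∈ S := hfT
  have hgc : ContDiffOn ℝ (⊤ : ℕ∞) g T :=
    hP.smooth.comp (contDiff_const.mul contDiff_id).contDiffOn (fun τ h => h)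
  have hi' : (i : WithTop ℕ∞) ≤ ((⊤ : ℕ∞) : WithTop ℕ∞) :=
    WithTop.coe_le_coe.2 (le_top : (i : ℕ∞) ≤ ⊤)
  have hε2 : 1 ≤ (ε ^ 2)⁻¹ := (one_le_inv₀ (by positivity)).2 (by nlinarith)
  have hcomp := norm_iteratedFDerivWithin_comp_le (n := i) (N := ((⊤ : ℕ∞) : WithTop ℕ∞))
    (g := g) (f := f) (s := S) (t := T) (x := x)
    (C := K ^ k * (ε ^ 2)⁻¹) (D := 2 / ε) hgc hfc.contDiffOn hi' hTo.uniqueDiffOn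
    hSo.uniqueDiffOn (fun y hy => hy) hxS ?_ ?_
  · rw [iteratedFDerivWithin_of_isOpen i hSo hxS] at hcomp
    refine hcomp.trans ?_
    have e1 : (i.factorial : ℝ) ≤ k.factorial := by exact_mod_cast Nat.factorial_le hik
    have e2 : (2 / ε) ^ i ≤ (2 / ε) ^ k := by
      apply pow_le_pow_right₀ _ hik
      rw [le_div_iff₀ hε]; linarith
    calc (i.factorial : ℝ) * (K ^ k * (ε ^ 2)⁻¹) * (2 / ε) ^ i
        ≤ k.factorial * (K ^ k * (ε ^ 2)⁻¹) * (2 / ε) ^ k := by gcongr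
      _ = _ := by
        rw [div_pow, pow_add]
        field_simp
  · intro j hj
    rw [iteratedFDerivWithin_of_isOpen j hTo hfT, norm_iteratedFDeriv_eq_norm_iteratedDeriv, hg,
      itd_scale]
    simp only
    rw [hLf, norm_mul, norm_pow, Real.norm_of_nonneg hLp.le, Real.norm_eq_abs]
    have hKk : 1 ≤ K ^ k := one_le_pow₀ hK
    rcases Nat.eq_zero_or_pos j with rfl | hj0
    · simp only [pow_zero, one_mul, iteratedDeriv_zero]
      have := hP.abs_le ht
      nlinarith
    · have h5 := hb ε _ hP _ ht j hj0 (by omega)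
      calc L ^ j * _ ≤ L ^ j * (K / L) ^ j := by gcongr
        _ = K ^ j := by rw [div_pow]; field_simp
        _ ≤ K ^ k := pow_le_pow_right₀ hK (by omega)
        _ ≤ _ := by nlinarith
  · intro j hj _
    rw [iteratedFDerivWithin_of_isOpen j hSo hxS]
    apply nsq_bound (inv_pos.2 hLp) (by positivity) _ _ j hj
    · rw [← div_eq_mul_inv, div_mul_eq_mul_div, div_le_div_iff₀ hLp hε]
      nlinarith
    · rw [← div_eq_mul_inv, div_pow, div_le_div_iff₀ hLp (by positivity)]
      nlinarith

/-- for every `0 < R ≤ 1` and every integer `k ≥ 0` there is a constant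
`C = C(R,k)` such that for all sufficiently small `ε > 0`, the `C^k` norm of `ū_ε` on
`B_R(0)` is at most `C·ε^{−k−2}`. -/
theorem stmt_12 (R : ℝ) (hR : 0 < R) (hR1 : R ≤ 1) (k : ℕ) :
    ∃ C : ℝ, ∃ ε₀ > 0, ∀ ε : ℝ, 0 < ε → ε < ε₀ →
      ∀ u : EuclideanSpace ℝ (Fin 2) → ℝ, IsDirichletSol ε u →
        ∀ i ≤ k, ∀ x ∈ ball (0 : EuclideanSpace ℝ (Fin 2)) R,
          ‖iteratedFDeriv ℝ i u x‖ ≤ C * ε ^ (-(k : ℤ) - 2) := by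
  obtain ⟨C, hC, hb⟩ := u_bound k
  refine ⟨C, 1, one_pos, ?_⟩
  intro ε hε hε1 u hu i hi x hx
  have hz : ε ^ (-(k : ℤ) - 2) = (ε ^ (k + 2))⁻¹ := by
    rw [← zpow_natCast, ← zpow_neg]
    congr 1
    push_cast
    ring
  rw [hz]
  have hx1 : x ∈ ball (0 : EuclideanSpace ℝ (Fin 2)) 1 := ball_subset_ball hR1 hx
  by_cases hx0 : x = 0
  · subst hx0
    have hi' : (i : WithTop ℕ∞) ≤ ((⊤ : ℕ∞) : WithTop ℕ∞) :=
      WithTop.coe_le_coe.2 (le_top : (i : ℕ∞) ≤ ⊤)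
    have hcd : ContDiffAt ℝ (⊤ : ℕ∞) u 0 := hu.2.1.contDiffAt (isOpen_ball.mem_nhds hx1)
    have hct : ContinuousAt (iteratedFDeriv ℝ i u) 0 := by
      exact hcd.continuousAt_iteratedFDeriv hi'
    have ht : Tendsto (fun y => ‖iteratedFDeriv ℝ i u y‖) (𝓝[≠] 0) (𝓝 ‖iteratedFDeriv ℝ i u 0‖) :=
      (hct.norm.tendsto).mono_left nhdsWithin_le_nhds
    refine le_of_tendsto ht ?_
    filter_upwards [self_mem_nhdsWithin, mem_nhdsWithin_of_mem_nhds (isOpen_ball.mem_nhds hx1)]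
      with y hy hyb
    exact hb ε hε hε1 u hu i hi y hyb hy
  · exact hb ε hε hε1 u hu i hi x hx1 hx0
end
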